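/- arXiv:2001.11308 — 9 statements merged into one kernel-verified Lean document; each statement's English description precedes it below -/
import Mathlib

section
/- Let D be the domain of a switching problem with controlled randomisation. For every x ∈ D: (1) the outward normal cone satisfies C(x) ⊆ {v ∈ ℝ^d : ∑_{i=1}^d v_i = 0}; (2) C(x) = C(y^x), where y^x := x − x_d·(1,…,1) ∈ D_∘ is the projection of x onto the slice D_∘ along the direction (1,…,1). -/
open Matrix

/-! Since the rows of each `P u` sum to one, adding a constant vector to `y` changes both sides of
every inequality defining `D` by the same amount. So `D` is invariant under translation along
`(1, …, 1)`: a normal vector pairs nonpositively with both `(1, …, 1)` and `-(1, …, 1)`, and normal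
cones do not change along this direction. -/

section NormalCone

open scoped Pointwise

variable {R E F : Type*} [CommRing R] [PartialOrder R] [AddCommGroup E] [Module R E]
  [AddCommGroup F] [Module R F] {p : F →ₗ[R] E →ₗ[R] R} {D : Set E} {x w : E} {v : F}

/-- The outward normal cone to `D` at `x`. Normals live in a space `F` paired with `E` by `p`, as
for `PointedCone.dual`; normal vectors in coordinates are obtained from `dotProductBilin`. -/
def outwardNormalCone (p : F →ₗ[R] E →ₗ[R] R) (D : Set E) (x : E) : Set F :=
  {v | ∀ z ∈ D, p v (z - x) ≤ 0}

theorem outwardNormalCone_vadd (p : F →ₗ[R] E →ₗ[R] R) (D : Set E) (x w : E) :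
    outwardNormalCone p (w +ᵥ D) (w +ᵥ x) = outwardNormalCone p D x := by
  ext v
  simp only [outwardNormalCone, Set.mem_ofPred_eq, ← Set.image_vadd, Set.forall_mem_image,
    vadd_eq_add, add_sub_add_left_eq_sub]

theorem outwardNormalCone_vadd_of_mem_stabilizer (p : F →ₗ[R] E →ₗ[R] R) (x : E)
    (hw : w ∈ AddAction.stabilizer E D) :
    outwardNormalCone p D (w +ᵥ x) = outwardNormalCone p D x := by
  rw [← outwardNormalCone_vadd p D x w, AddAction.mem_stabilizer_iff.mp hw]

theorem apply_nonpos_of_mem_outwardNormalCone (hv : v ∈ outwardNormalCone p D x)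
    (hw : w +ᵥ x ∈ D) : p v w ≤ 0 := by
  simpa only [vadd_eq_add, add_sub_cancel_right] using hv _ hw

theorem apply_eq_zero_of_mem_outwardNormalCone [IsOrderedAddMonoid R]
    (hv : v ∈ outwardNormalCone p D x) (hx : x ∈ D) (hw : w ∈ AddAction.stabilizer E D) :
    p v w = 0 := by
  have nonpos {w' : E} (hw' : w' ∈ AddAction.stabilizer E D) : p v w' ≤ 0 :=
    apply_nonpos_of_mem_outwardNormalCone hv ((AddAction.mem_stabilizer_set.mp hw' x).mpr hx)
  have neg_apply_nonpos : -p v w ≤ 0 := by simpa only [map_neg] using nonpos (neg_mem hw)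
  exact le_antisymm (nonpos hw) (neg_nonpos.mp neg_apply_nonpos)

end NormalCone

theorem mulVec_const_of_sum_row_eq_one {R m n : Type*} [NonAssocSemiring R] [Fintype n]
    {A : Matrix m n R} (hA : ∀ i, ∑ j, A i j = 1) (a : R) :
    A *ᵥ Function.const n a = Function.const m a := by
  ext i
  simp only [mulVec, dotProduct, Function.const_apply, ← Finset.sum_mul, hA, one_mul]

section SwitchingDomain

open scoped Pointwise

variable {R ι 𝒞 : Type*} [CommRing R] [PartialOrder R] [IsOrderedAddMonoid R] [Fintype ι]
  {P : 𝒞 → Matrix ι ι R} {c : 𝒞 → ι → R} {x : ι → R}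

/-- The domain of a switching problem with transition matrices `P` and switching costs `c`. The
bound by the supremum over the controls is written as one inequality per control, so no supremum
needs to exist. -/
def switchingDomain (P : 𝒞 → Matrix ι ι R) (c : 𝒞 → ι → R) : Set (ι → R) :=
  {y | ∀ i u, (P u *ᵥ y) i - c u i ≤ y i}

theorem const_vadd_mem_switchingDomain_iff (hP : ∀ u i, ∑ j, P u i j = 1) (a : R) :
    Function.const ι a +ᵥ x ∈ switchingDomain P c ↔ x ∈ switchingDomain P c := by
  simp only [switchingDomain, Set.mem_ofPred_eq, vadd_eq_add, mulVec_add,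
    mulVec_const_of_sum_row_eq_one (hP _), Pi.add_apply, Function.const_apply, add_sub_assoc,
    add_le_add_iff_left]

theorem const_mem_stabilizer_switchingDomain (hP : ∀ u i, ∑ j, P u i j = 1) (c : 𝒞 → ι → R)
    (a : R) : Function.const ι a ∈ AddAction.stabilizer (ι → R) (switchingDomain P c) :=
  AddAction.mem_stabilizer_set.mpr fun _ => const_vadd_mem_switchingDomain_iff hP a

theorem sum_eq_zero_of_mem_outwardNormalCone_switchingDomain (hP : ∀ u i, ∑ j, P u i j = 1)
    (hx : x ∈ switchingDomain P c) {v : ι → R}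
    (hv : v ∈ outwardNormalCone (dotProductBilin R R) (switchingDomain P c) x) :
    ∑ i, v i = 0 :=
  calc ∑ i, v i = v ⬝ᵥ 1 := (dotProduct_one v).symm
    _ = 0 := apply_eq_zero_of_mem_outwardNormalCone hv hx
      (const_mem_stabilizer_switchingDomain hP c 1)

theorem normal_cone_sum_zero_and_translation_general (hP : ∀ u i, ∑ j, P u i j = 1)
    (hx : x ∈ switchingDomain P c) (k : ι) :
    (∀ v ∈ outwardNormalCone (dotProductBilin R R) (switchingDomain P c) x, ∑ i, v i = 0) ∧
      (x - Function.const ι (x k) ∈ switchingDomain P c ∧ (x - Function.const ι (x k)) k = 0) ∧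
      outwardNormalCone (dotProductBilin R R) (switchingDomain P c) x =
        outwardNormalCone (dotProductBilin R R) (switchingDomain P c)
          (x - Function.const ι (x k)) := by
  have projection_eq : x - Function.const ι (x k) = Function.const ι (-x k) +ᵥ x :=
    sub_eq_neg_add x _
  refine ⟨fun v => sum_eq_zero_of_mem_outwardNormalCone_switchingDomain hP hx,
    ⟨?_, sub_self (x k)⟩, ?_⟩
  · rwa [projection_eq, const_vadd_mem_switchingDomain_iff hP]
  · rw [projection_eq, outwardNormalCone_vadd_of_mem_stabilizer _ _
      (const_mem_stabilizer_switchingDomain hP c (-x k))]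

end SwitchingDomain

/-- Let `D` be the domain of a switching problem with controlled
randomisation.  For every `x ∈ D`:
(1) the outward normal cone `C(x) = {v : vᵀ(z − x) ≤ 0 ∀ z ∈ D}` satisfies
`C(x) ⊆ {v : ∑ i, v i = 0}`;
(2) `C(x) = C(y^x)` where `y^x := x − x_d·(1,…,1)` is the projection of `x` onto
the slice `D_∘ = D ∩ {y_d = 0}` along the direction `(1,…,1)` (and `y^x ∈ D_∘`). -/
theorem normal_cone_sum_zero_and_translation
    (n : ℕ) (𝒞 : Type*)
    (P : 𝒞 → Matrix (Fin (n + 2)) (Fin (n + 2)) ℝ)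
    (c : 𝒞 → Fin (n + 2) → ℝ)
    (hP0 : ∀ u i j, 0 ≤ P u i j)
    (hP1 : ∀ u i, ∑ j, P u i j = 1)
    (D : Set (Fin (n + 2) → ℝ))
    (hD : D = {y | ∀ i, ∀ u : 𝒞, (∑ j, P u i j * y j) - c u i ≤ y i}) :
    ∀ x ∈ D,
      (∀ v : Fin (n + 2) → ℝ,
        (∀ z ∈ D, (∑ i, v i * (z i - x i)) ≤ 0) → ∑ i, v i = 0) ∧
      ((fun i => x i - x (Fin.last (n + 1))) ∈ D ∧
        (fun i => x i - x (Fin.last (n + 1))) (Fin.last (n + 1)) = 0) ∧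
      {v : Fin (n + 2) → ℝ | ∀ z ∈ D, (∑ i, v i * (z i - x i)) ≤ 0} =
        {v : Fin (n + 2) → ℝ |
          ∀ z ∈ D, (∑ i, v i * (z i - (x i - x (Fin.last (n + 1))))) ≤ 0} := by
  subst hD
  exact fun x hx => normal_cone_sum_zero_and_translation_general hP1 hx (Fin.last (n + 1))
end

section
/- In the uncontrolled setting with an irreducible stochastic matrix P: for every x ∈ D and all indices 1 ≤ i, j ≤ d, one has −C_{i,j} ≤ x_i − x_j ≤ C_{j,i}. -/
open Matrix

/-!
Add to a domain point `x`, normalized to vanish at `j`, the expected cost `h` paid until the chain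
hits `j`. Since `h` solves `(1 - P) h = c` off `j`, the sum is superharmonic off `j` and vanishes at
`j`. A negative minimum of it would propagate along the transitions of positive probability and
eventually reach `j`, so `x i - x j + h i ≥ 0`. The same minimum principle shows that a vector whose
image under the block `Q^(j,j)` of `Q = 1 - P` is nonnegative is itself nonnegative; hence this
block is injective and the inverse defining `h` exists.
-/

section MinimumPrinciple

variable {K ι : Type*} [Fintype ι]

theorem eq_of_dotProduct_le_of_forall_le [CommRing K] [LinearOrder K] [IsStrictOrderedRing K]
    {w z : ι → K} {m : K} (hw : ∀ a, 0 ≤ w a) (hw_sum : ∑ a, w a ≤ 1) (hm : m ≤ 0)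
    (hz : ∀ a, m ≤ z a) (hwz : w ⬝ᵥ z ≤ m) {a : ι} (ha : 0 < w a) : z a = m := by
  have excess_nonneg : ∀ b ∈ Finset.univ, 0 ≤ w b * (z b - m) :=
    fun b _ => mul_nonneg (hw b) (sub_nonneg.2 (hz b))
  have excess_sum : ∑ b, w b * (z b - m) ≤ 0 := calc
    ∑ b, w b * (z b - m) = w ⬝ᵥ z - (∑ b, w b) * m := by
      simp only [dotProduct, mul_sub, Finset.sum_sub_distrib, Finset.sum_mul]
    _ ≤ m - 1 * m := sub_le_sub hwz (mul_le_mul_of_nonpos_right hw_sum hm)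
    _ = 0 := by ring
  have excess_eq_zero : w a * (z a - m) = 0 :=
    (Finset.sum_eq_zero_iff_of_nonneg excess_nonneg).1
      (excess_sum.antisymm (Finset.sum_nonneg excess_nonneg)) a (Finset.mem_univ a)
  exact sub_eq_zero.1 ((mul_eq_zero.1 excess_eq_zero).resolve_left ha.ne')

variable [DecidableEq ι]

theorem exists_pos_and_pow_pos_of_pow_succ_pos [Semiring K] [LinearOrder K]
    [IsStrictOrderedRing K] {P : Matrix ι ι K} (hP : ∀ i j, 0 ≤ P i j) {k : ℕ} {i j : ι}
    (h : 0 < (P ^ (k + 1)) i j) : ∃ a, 0 < P i a ∧ 0 < (P ^ k) a j := by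
  rw [pow_succ', Matrix.mul_apply] at h
  obtain ⟨a, -, ha⟩ := Finset.exists_lt_of_sum_lt (Finset.sum_const_zero.trans_lt h)
  have hpow : 0 < (P ^ k) a j := pos_of_mul_pos_right ha (hP i a)
  exact ⟨a, pos_of_mul_pos_left ha hpow.le, hpow⟩

/-- The set `S` of states is accessible from every state of the chain with transition matrix `P`:
some path of positive probability, possibly of length `0`, leads to it. -/
def IsAccessible [Semiring K] [LT K] (P : Matrix ι ι K) (S : Finset ι) : Prop :=
  ∀ i, ∃ j ∈ S, ∃ k : ℕ, 0 < (P ^ k) i j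

theorem nonneg_of_mulVec_le_of_isAccessible [CommRing K] [LinearOrder K] [IsStrictOrderedRing K]
    {P : Matrix ι ι K} {S : Finset ι} {z : ι → K} (hP : ∀ i j, 0 ≤ P i j)
    (hP_sum : ∀ i, ∑ j, P i j ≤ 1) (hS : IsAccessible P S) (hz_mem : ∀ i ∈ S, 0 ≤ z i)
    (hz : ∀ i ∉ S, (P *ᵥ z) i ≤ z i) (i : ι) : 0 ≤ z i := by
  by_contra! hi
  have : Nonempty ι := ⟨i⟩
  obtain ⟨m, hm⟩ := Finite.exists_min z
  have hm_neg : z m < 0 := (hm i).trans_lt hi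
  have no_path_to_S : ∀ k a, z a = z m → ∀ j ∈ S, ¬ 0 < (P ^ k) a j := by
    intro k
    induction k with
    | zero =>
      intro a ha j hj hpos
      obtain rfl : a = j := by
        by_contra hne
        simp [Matrix.one_apply_ne hne] at hpos
      exact (hz_mem a hj).not_gt (ha ▸ hm_neg)
    | succ k ih =>
      intro a ha j hj hpos
      have ha_notMem : a ∉ S := fun h => (hz_mem a h).not_gt (ha ▸ hm_neg)
      obtain ⟨b, hab, hbj⟩ := exists_pos_and_pow_pos_of_pow_succ_pos hP hpos
      have hb : z b = z m := eq_of_dotProduct_le_of_forall_le (hP a) (hP_sum a) hm_neg.le hm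
        ((hz a ha_notMem).trans_eq ha) hab
      exact ih b hb j hj hbj
  obtain ⟨j, hj, k, hpos⟩ := hS m
  exact no_path_to_S k m rfl j hj hpos

end MinimumPrinciple

section HittingCost

variable {K ι : Type*} [Fintype ι]

theorem toSquareBlockProp_mulVec_apply [NonUnitalNonAssocSemiring K] (M : Matrix ι ι K)
    {p : ι → Prop} [DecidablePred p] (v : {i // p i} → K) (i : {i // p i}) :
    (M.toSquareBlockProp p *ᵥ v) i = (M *ᵥ Function.extend Subtype.val v 0) i := by
  refine Fintype.sum_of_injective Subtype.val Subtype.val_injective _ _ (fun a ha => ?_)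
    fun a => ?_
  · rw [Function.extend_apply' _ _ _ ha, Pi.zero_apply, mul_zero]
  · simp only [toSquareBlockProp_def, of_apply, Subtype.val_injective.extend_apply]

variable [DecidableEq ι]

theorem le_of_toSquareBlockProp_mulVec_le [CommRing K] [LinearOrder K] [IsStrictOrderedRing K]
    {P : Matrix ι ι K} {S : Finset ι} (hP : ∀ i j, 0 ≤ P i j) (hP_sum : ∀ i, ∑ j, P i j ≤ 1)
    (hS : IsAccessible P S) {u v : {i // i ∉ S} → K}
    (huv : (1 - P).toSquareBlockProp (· ∉ S) *ᵥ u ≤ (1 - P).toSquareBlockProp (· ∉ S) *ᵥ v) :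
    u ≤ v := by
  set z : ι → K := Function.extend Subtype.val (v - u) 0
  have hz_mem : ∀ i ∈ S, z i = 0 := fun i hi =>
    Function.extend_val_apply' (p := (· ∉ S)) (not_not.2 hi)
  have hz : ∀ i ∉ S, (P *ᵥ z) i ≤ z i := fun i hi => by
    have h := toSquareBlockProp_mulVec_apply (1 - P) (v - u) ⟨i, hi⟩
    rw [mulVec_sub, sub_mulVec, one_mulVec] at h
    exact sub_nonneg.1 ((sub_nonneg.2 (huv ⟨i, hi⟩)).trans_eq h)
  intro i
  have hzi : z i = v i - u i := Subtype.val_injective.extend_apply _ _ _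
  exact sub_nonneg.1 (hzi ▸ nonneg_of_mulVec_le_of_isAccessible hP hP_sum hS
    (fun a ha => (hz_mem a ha).ge) hz i)

/-- The expected cost accumulated by the chain with transition matrix `P` and running cost `c`
until it first hits `S`, as a function of the initial state: it vanishes on `S`, and off `S` it is
`(Q^(S))⁻¹ c^(S)`, where `Q = 1 - P` and `^(S)` deletes the indices in `S`. The paper's `C i j` is
`hittingCost P c {j} i`. The inverse is `0` if the block is singular. -/
noncomputable def hittingCost [CommRing K] (P : Matrix ι ι K) (c : ι → K) (S : Finset ι) :
    ι → K :=
  Function.extend Subtype.val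
    (((1 - P).toSquareBlockProp (· ∉ S))⁻¹ *ᵥ fun a : {i // i ∉ S} => c a) 0

theorem hittingCost_of_mem [CommRing K] {P : Matrix ι ι K} {c : ι → K} {S : Finset ι} {i : ι}
    (hi : i ∈ S) : hittingCost P c S i = 0 :=
  Function.extend_val_apply' (p := (· ∉ S)) (not_not.2 hi)

variable [Field K] [LinearOrder K] [IsStrictOrderedRing K] {P : Matrix ι ι K} {S : Finset ι}

theorem isUnit_toSquareBlockProp_one_sub (hP : ∀ i j, 0 ≤ P i j)
    (hP_sum : ∀ i, ∑ j, P i j ≤ 1) (hS : IsAccessible P S) :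
    IsUnit ((1 - P).toSquareBlockProp (· ∉ S)) :=
  mulVec_injective_iff_isUnit.1 fun _ _ huv =>
    le_antisymm (le_of_toSquareBlockProp_mulVec_le hP hP_sum hS huv.le)
      (le_of_toSquareBlockProp_mulVec_le hP hP_sum hS huv.ge)

theorem mulVec_hittingCost_of_notMem (hP : ∀ i j, 0 ≤ P i j) (hP_sum : ∀ i, ∑ j, P i j ≤ 1)
    (hS : IsAccessible P S) (c : ι → K) {i : ι} (hi : i ∉ S) :
    (P *ᵥ hittingCost P c S) i = hittingCost P c S i - c i := by
  have hdet := (isUnit_iff_isUnit_det _).1 (isUnit_toSquareBlockProp_one_sub hP hP_sum hS)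
  have poisson : ((1 - P) *ᵥ hittingCost P c S) i = c i := by
    rw [hittingCost, ← toSquareBlockProp_mulVec_apply (1 - P) _ ⟨i, hi⟩, mulVec_mulVec,
      mul_nonsing_inv _ hdet, one_mulVec]
  rw [sub_mulVec, one_mulVec, Pi.sub_apply] at poisson
  rw [← poisson, sub_sub_cancel]

theorem neg_hittingCost_le (hP : ∀ i j, 0 ≤ P i j) (hP_sum : ∀ i, ∑ j, P i j ≤ 1)
    (hS : IsAccessible P S) {c y : ι → K} (hy_mem : ∀ i ∈ S, 0 ≤ y i)
    (hy : ∀ i ∉ S, (P *ᵥ y) i - c i ≤ y i) (i : ι) : -hittingCost P c S i ≤ y i := by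
  refine neg_le_iff_add_nonneg.2
    (nonneg_of_mulVec_le_of_isAccessible (z := y + hittingCost P c S) hP hP_sum hS ?_ ?_ i)
  · intro a ha
    rw [Pi.add_apply, hittingCost_of_mem ha, add_zero]
    exact hy_mem a ha
  · intro a ha
    rw [mulVec_add, Pi.add_apply, Pi.add_apply, mulVec_hittingCost_of_notMem hP hP_sum hS c ha]
    linarith [hy a ha]

theorem neg_hittingCost_singleton_le_sub (hP : P ∈ rowStochastic K ι) {c x : ι → K}
    (hx : P *ᵥ x - c ≤ x) {j : ι} (hj : IsAccessible P {j}) (i : ι) :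
    -hittingCost P c {j} i ≤ x i - x j := by
  have hconst : P *ᵥ (fun _ => x j) = fun _ => x j := by
    ext a
    simp only [mulVec, dotProduct, ← Finset.sum_mul, sum_row_of_mem_rowStochastic hP, one_mul]
  refine neg_hittingCost_le (y := x - fun _ => x j) hP.1
    (fun a => (sum_row_of_mem_rowStochastic hP a).le) hj (fun a ha => ?_) (fun a _ => ?_) i
  · rw [Finset.mem_singleton.1 ha, Pi.sub_apply, sub_self]
  · rw [mulVec_sub, hconst, Pi.sub_apply, sub_right_comm]
    exact sub_le_sub_right (hx a) _

theorem domain_point_differences_bounded_by_costs_general (hP : P ∈ rowStochastic K ι)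
    {c x : ι → K} (hx : P *ᵥ x - c ≤ x) {i j : ι} (hi : IsAccessible P {i})
    (hj : IsAccessible P {j}) :
    -hittingCost P c {j} i ≤ x i - x j ∧ x i - x j ≤ hittingCost P c {i} j :=
  ⟨neg_hittingCost_singleton_le_sub hP hx hj i,
    by simpa only [neg_sub] using neg_le.1 (neg_hittingCost_singleton_le_sub hP hx hi j)⟩

end HittingCost

section SuccAbove

variable {K : Type*} [CommRing K] {n : ℕ} {P : Matrix (Fin (n + 1)) (Fin (n + 1)) K}
  {c : Fin (n + 1) → K}

theorem hittingCost_singleton_succAbove (j : Fin (n + 1)) (k : Fin n) :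
    hittingCost P c {j} (j.succAbove k) =
      (((1 - P).submatrix j.succAbove j.succAbove)⁻¹ *ᵥ fun l => c (j.succAbove l)) k := by
  let e : Fin n ≃ {i // i ∉ ({j} : Finset (Fin (n + 1)))} :=
    (finSuccAboveEquiv j).trans (Equiv.subtypeEquivRight (by simp))
  have hblock : (1 - P).submatrix j.succAbove j.succAbove =
      ((1 - P).toSquareBlockProp (· ∉ ({j} : Finset (Fin (n + 1))))).submatrix e e := rfl
  have hcost : (fun l => c (j.succAbove l)) ∘ e.symm =
      fun a : {i // i ∉ ({j} : Finset (Fin (n + 1)))} => c a :=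
    funext fun a => congrArg c (congrArg Subtype.val (e.apply_symm_apply a))
  rw [hblock, inv_submatrix_equiv, submatrix_mulVec_equiv, hcost]
  exact Subtype.val_injective.extend_apply _ _ (e k)

theorem eq_hittingCost_singleton_of_succAbove {C : Fin (n + 1) → Fin (n + 1) → K}
    (hCdiag : ∀ j, C j j = 0)
    (hCoff : ∀ j k, C (j.succAbove k) j =
      (((1 - P).submatrix j.succAbove j.succAbove)⁻¹ *ᵥ fun l => c (j.succAbove l)) k)
    (i j : Fin (n + 1)) : C i j = hittingCost P c {j} i := by
  obtain rfl | ⟨k, rfl⟩ := Fin.eq_self_or_eq_succAbove j i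
  · rw [hCdiag, hittingCost_of_mem (Finset.mem_singleton_self i)]
  · rw [hCoff, hittingCost_singleton_succAbove]

end SuccAbove

/-- Uncontrolled setting with an irreducible stochastic matrix `P`
(`d = n + 2`), `Q = I − P`, cost vector `c̄` and domain `D`.  The cost matrix `C` is
defined by `C j j = 0` and, for `i ≠ j` (written `i = j.succAbove k`),
`C i j = ((Q^{(j,j)})⁻¹ c̄^{(j)})_{i^{(j)}}`.  Then for every `x ∈ D` and all indices
`i, j`, one has `−C i j ≤ x i − x j ≤ C j i`. -/
theorem domain_point_differences_bounded_by_costs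
    (n : ℕ)
    (P : Matrix (Fin (n + 2)) (Fin (n + 2)) ℝ)
    (c : Fin (n + 2) → ℝ)
    (hP0 : ∀ i j, 0 ≤ P i j)
    (hP1 : ∀ i, ∑ j, P i j = 1)
    (hirr : ∀ i j, ∃ k : ℕ, 1 ≤ k ∧ 0 < (P ^ k) i j)
    (C : Fin (n + 2) → Fin (n + 2) → ℝ)
    (hCdiag : ∀ j, C j j = 0)
    (hCoff : ∀ (j : Fin (n + 2)) (k : Fin (n + 1)),
      C (j.succAbove k) j =
        (((1 - P).submatrix j.succAbove j.succAbove)⁻¹ *ᵥ fun l => c (j.succAbove l)) k)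
    (D : Set (Fin (n + 2) → ℝ))
    (hD : D = {x | ∀ i, (∑ j, P i j * x j) - c i ≤ x i}) :
    ∀ x ∈ D, ∀ i j : Fin (n + 2), -C i j ≤ x i - x j ∧ x i - x j ≤ C j i := by
  subst hD
  intro x hx i j
  have accessible : ∀ j, IsAccessible P {j} := fun j i =>
    (hirr i j).elim fun k hk => ⟨j, Finset.mem_singleton_self j, k, hk.2⟩
  simpa only [eq_hittingCost_singleton_of_succAbove hCdiag hCoff] using
    domain_point_differences_bounded_by_costs_general
      (mem_rowStochastic_iff_sum.2 ⟨hP0, hP1⟩) hx (accessible i) (accessible j)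
end

section
/- In the uncontrolled setting with an irreducible stochastic matrix P: if the domain D is nonempty, then C_{i,j} + C_{j,i} ≥ 0 for all 1 ≤ i, j ≤ d, and the slice D_∘ = D ∩ {y ∈ ℝ^d : y_d = 0} is a compact subset of ℝ^d. Moreover, if D has nonempty interior, then C_{i,j} + C_{j,i} > 0 for all 1 ≤ i ≠ j ≤ d. -/
open Matrix

/-!
A function that is superharmonic for an irreducible stochastic matrix `P` wherever it is negative,
and nonnegative somewhere, is nonnegative: a negative minimum would propagate along the positive
entries of `P` to every state. Hence proper principal submatrices of `1 - P` are invertible, and the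
column `C · j` is characterised by a Poisson equation off `j`. For `x` in the domain,
`x - x j + C · j` is superharmonic off `j` and vanishes at `j`, which gives the two-sided estimate
`-C j i ≤ x j - x i ≤ C i j`. It bounds the slice, and its two halves add up to
`0 ≤ C i j + C j i`. As `x ↦ x j - x i` is an open map, the estimates are strict in the interior.
-/

section MinimumPrinciple

variable {ι R : Type*} [CommRing R] [LinearOrder R] {P : Matrix ι ι R}

lemma irreducible_induction (hP : P.IsIrreducible) {p : ι → Prop}
    (step : ∀ a b, 0 < P a b → p a → p b) {i : ι} (hi : p i) (j : ι) : p j := by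
  let := P.toQuiver
  obtain ⟨path, -⟩ := hP.connected i j
  induction path with
  | nil => exact hi
  | cons _ edge ih => exact step _ _ edge.down ih

variable [IsStrictOrderedRing R] [Fintype ι]

lemma eq_of_superharmonic_at_min (hP0 : ∀ i j, 0 ≤ P i j) (hP1 : P *ᵥ 1 = 1) {z : ι → R} {a b : ι}
    (hmin : ∀ k, z a ≤ z k) (ha : (P *ᵥ z) a ≤ z a) (hab : 0 < P a b) : z b = z a := by
  have hterm : ∀ k ∈ Finset.univ, 0 ≤ P a k * (z k - z a) := fun k _ =>
    mul_nonneg (hP0 a k) (sub_nonneg.2 (hmin k))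
  have hrow : ∑ k, P a k = 1 := by simpa [mulVec, dotProduct] using congrFun hP1 a
  have hsum : ∑ k, P a k * (z k - z a) = (P *ᵥ z) a - z a := by
    simp only [mul_sub, Finset.sum_sub_distrib, ← Finset.sum_mul, hrow, one_mul, mulVec, dotProduct]
  have hzero : ∑ k, P a k * (z k - z a) = 0 :=
    le_antisymm (hsum.trans_le (sub_nonpos.2 ha)) (Finset.sum_nonneg hterm)
  have hb := (Finset.sum_eq_zero_iff_of_nonneg hterm).1 hzero b (Finset.mem_univ b)
  exact sub_eq_zero.1 ((mul_eq_zero.1 hb).resolve_left hab.ne')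

theorem nonneg_of_superharmonic_of_neg (hP : P.IsIrreducible) (hP1 : P *ᵥ 1 = 1) {z : ι → R} {j : ι}
    (hj : 0 ≤ z j) (hz : ∀ i, z i < 0 → (P *ᵥ z) i ≤ z i) (i : ι) : 0 ≤ z i := by
  have : Nonempty ι := ⟨j⟩
  obtain ⟨m, hm⟩ := Finite.exists_min z
  by_contra! hi
  have hm_neg : z m < 0 := (hm i).trans_lt hi
  have hconst : z j = z m :=
    irreducible_induction hP (p := fun a => z a = z m) (fun a b hab ha =>
      (eq_of_superharmonic_at_min hP.nonneg hP1 (fun k => ha.trans_le (hm k))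
        (hz a (ha.trans_lt hm_neg)) hab).trans ha) rfl j
  exact (hconst.trans_lt hm_neg).not_ge hj

end MinimumPrinciple

section HittingCost

variable {ι κ R : Type*} [Fintype ι]

lemma submatrix_mulVec_comp_of_eq_zero [Fintype κ] [NonUnitalNonAssocSemiring R] {l m : Type*}
    (A : Matrix m ι R) (f : l → m) {e : κ → ι} (he : e.Injective) {z : ι → R}
    (hz : ∀ i ∉ Set.range e, z i = 0) : A.submatrix f e *ᵥ (z ∘ e) = (A *ᵥ z) ∘ f := by
  funext k
  exact Fintype.sum_of_injective e he _ _ (fun i hi => by rw [hz i hi, mul_zero]) fun _ => rfl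

/-- The cost domain `D = {x | Q x + c ≥ 0}`, with `Q = 1 - P` written out. -/
def costDomain [CommRing R] [LE R] (P : Matrix ι ι R) (c : ι → R) : Set (ι → R) :=
  {x | ∀ i, (P *ᵥ x) i - c i ≤ x i}

/-- `u i` is the expected total cost accumulated by the chain `P`, with running cost `c`, from `i`
until it hits the target `j`. It is encoded by the Poisson equation, whose solution is the
column `C · j` of the cost matrix by `isHittingCost_iff_eq_inv_mulVec`. -/
structure IsHittingCost [CommRing R] (P : Matrix ι ι R) (c : ι → R) (j : ι) (u : ι → R) :
    Prop where
  target : u j = 0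
  poisson : ∀ i ≠ j, u i - (P *ᵥ u) i = c i

lemma IsHittingCost.sub_le [CommRing R] [LinearOrder R] [IsStrictOrderedRing R]
    {P : Matrix ι ι R} {c u x : ι → R} {j : ι}
    (hP : P.IsIrreducible) (hP1 : P *ᵥ 1 = 1) (hu : IsHittingCost P c j u)
    (hx : x ∈ costDomain P c) (i : ι) : x j - x i ≤ u i := by
  let z : ι → R := x - x j • 1 + u
  have hz_apply (k : ι) : z k = x k - x j + u k := by simp [z]
  have hPz (k : ι) : (P *ᵥ z) k = (P *ᵥ x) k - x j + (P *ᵥ u) k := by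
    simp [z, mulVec_add, mulVec_sub, mulVec_smul, hP1]
  have hzj : z j = 0 := by simp [hz_apply, hu.target]
  have hz : 0 ≤ z i := nonneg_of_superharmonic_of_neg hP hP1 hzj.ge (fun k hk => by
    have hkj : k ≠ j := by
      rintro rfl
      exact hk.ne hzj
    linarith [hz_apply k, hPz k, hu.poisson k hkj, hx k]) i
  linarith [hz_apply i]

variable [Fintype κ] [DecidableEq ι] [DecidableEq κ]
  [Field R] [LinearOrder R] [IsStrictOrderedRing R] {P : Matrix ι ι R}

theorem isUnit_submatrix_one_sub (hP : P.IsIrreducible) (hP1 : P *ᵥ 1 = 1) {e : κ → ι}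
    (he : e.Injective) {j : ι} (hj : j ∉ Set.range e) :
    IsUnit ((1 - P).submatrix e e) := by
  rw [← mulVec_injective_iff_isUnit, ← coe_mulVecLin, injective_iff_map_eq_zero]
  intro v hv
  rw [mulVecLin_apply] at hv
  set z : ι → R := Function.extend e v 0
  have hz_off : ∀ i ∉ Set.range e, z i = 0 :=
    Function.extend_apply' v (0 : ι → R)
  have hze : z ∘ e = v := funext (he.extend_apply v 0)
  have hharm : ∀ i, z i ≠ 0 → (P *ᵥ z) i = z i := by
    intro i hi
    obtain ⟨k, rfl⟩ := not_imp_comm.1 (hz_off i) hi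
    rw [← hze, submatrix_mulVec_comp_of_eq_zero _ _ he hz_off, sub_mulVec, one_mulVec] at hv
    exact (sub_eq_zero.1 (congrFun hv k)).symm
  have hnonneg := nonneg_of_superharmonic_of_neg hP hP1 (hz_off j hj).ge
    fun i hi => (hharm i hi.ne).le
  have hnonpos := nonneg_of_superharmonic_of_neg (z := -z) hP hP1 (j := j) (by simp [hz_off j hj])
    fun i hi => by
      rw [mulVec_neg, Pi.neg_apply, Pi.neg_apply, hharm i (neg_ne_zero.1 hi.ne)]
  have hz : z = 0 := funext fun i => le_antisymm (neg_nonneg.1 (hnonpos i)) (hnonneg i)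
  rw [← hze, hz, Pi.zero_comp]

theorem isHittingCost_iff_eq_inv_mulVec (hP : P.IsIrreducible) (hP1 : P *ᵥ 1 = 1) {e : κ → ι}
    (he : e.Injective) {j : ι} (hrange : Set.range e = {j}ᶜ) {c u : ι → R} :
    IsHittingCost P c j u ↔
      u j = 0 ∧ u ∘ e = ((1 - P).submatrix e e)⁻¹ *ᵥ (c ∘ e) := by
  have hunit := isUnit_submatrix_one_sub hP hP1 he (j := j) (by simp [hrange])
  have hpoisson (hu : u j = 0) : (∀ i ≠ j, u i - (P *ᵥ u) i = c i) ↔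
      (1 - P).submatrix e e *ᵥ (u ∘ e) = c ∘ e := by
    rw [submatrix_mulVec_comp_of_eq_zero _ _ he (by simp [hrange, hu]), sub_mulVec, one_mulVec,
      funext_iff]
    simp only [← Set.mem_compl_singleton_iff, ← hrange, Set.forall_mem_range, Function.comp_apply,
      Pi.sub_apply]
  have hdet := (isUnit_iff_isUnit_det _).1 hunit
  refine ⟨fun h => ⟨h.target, ?_⟩, fun ⟨hu, h⟩ => ⟨hu, (hpoisson hu).2 ?_⟩⟩
  · rw [← (hpoisson h.target).1 h.poisson, mulVec_mulVec, nonsing_inv_mul _ hdet, one_mulVec]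
  · rw [h, mulVec_mulVec, mul_nonsing_inv _ hdet, one_mulVec]

end HittingCost

section Real

lemma interior_setOf_sub_le {ι : Type*} {i j : ι} (hij : i ≠ j) (a : ℝ) :
    interior {x : ι → ℝ | x j - x i ≤ a} = {x | x j - x i < a} := by
  classical
  let f : (ι → ℝ) →L[ℝ] ℝ := .proj j - .proj i
  have hf : f ≠ 0 := fun h => by simpa [f, hij] using DFunLike.congr_fun h (Pi.single j 1)
  calc interior (f ⁻¹' Set.Iic a) = f ⁻¹' interior (Set.Iic a) :=
        ((f.isOpenMap_of_ne_zero hf).preimage_interior_eq_interior_preimage f.continuous _).symm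
    _ = f ⁻¹' Set.Iio a := by rw [interior_Iic]

variable {ι : Type*} [Fintype ι] {P : Matrix ι ι ℝ} {c : ι → ℝ}

lemma isClosed_costDomain (P : Matrix ι ι ℝ) (c : ι → ℝ) : IsClosed (costDomain P c) := by
  rw [costDomain, Set.ofPred_forall]
  exact isClosed_iInter fun i => isClosed_le (by fun_prop) (by fun_prop)

lemma IsHittingCost.sub_lt_of_mem_interior {u x : ι → ℝ} {j : ι} (hP : P.IsIrreducible)
    (hP1 : P *ᵥ 1 = 1) (hu : IsHittingCost P c j u) (hx : x ∈ interior (costDomain P c)) {i : ι}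
    (hij : i ≠ j) : x j - x i < u i := by
  have hsub : costDomain P c ⊆ {x | x j - x i ≤ u i} := fun y hy => hu.sub_le hP hP1 hy i
  have hx' := interior_mono hsub hx
  rwa [interior_setOf_sub_le hij] at hx'

lemma isCompact_costDomain_slice {C : ι → ι → ℝ} (hP : P.IsIrreducible) (hP1 : P *ᵥ 1 = 1)
    (hC : ∀ j, IsHittingCost P c j fun i => C i j) (o : ι) :
    IsCompact (costDomain P c ∩ {y | y o = 0}) := by
  have hclosed : IsClosed (costDomain P c ∩ {y | y o = 0}) :=
    (isClosed_costDomain P c).inter (isClosed_eq (by fun_prop) (by fun_prop))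
  refine (isCompact_Icc (a := fun i => -C i o) (b := fun i => C o i)).of_isClosed_subset hclosed ?_
  rintro y ⟨hy, hyo : y o = 0⟩
  refine ⟨fun i => ?_, fun i => ?_⟩
  · simpa [hyo, neg_le] using (hC o).sub_le hP hP1 hy i
  · simpa [hyo] using (hC i).sub_le hP hP1 hy o

theorem nonempty_domain_costs_and_compact_slice_general {C : ι → ι → ℝ} (hP : P.IsIrreducible)
    (hP1 : P *ᵥ 1 = 1) (hC : ∀ j, IsHittingCost P c j fun i => C i j) (o : ι) :
    ((costDomain P c).Nonempty →
      (∀ i j, 0 ≤ C i j + C j i) ∧ IsCompact (costDomain P c ∩ {y | y o = 0})) ∧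
    ((interior (costDomain P c)).Nonempty → ∀ i j, i ≠ j → 0 < C i j + C j i) := by
  refine ⟨fun ⟨x, hx⟩ => ⟨fun i j => ?_, isCompact_costDomain_slice hP hP1 hC o⟩,
    fun ⟨x, hx⟩ i j hij => ?_⟩
  · linarith [(hC j).sub_le hP hP1 hx i, (hC i).sub_le hP hP1 hx j]
  · linarith [(hC j).sub_lt_of_mem_interior hP hP1 hx hij,
      (hC i).sub_lt_of_mem_interior hP hP1 hx hij.symm]

end Real

/-- Uncontrolled setting with an irreducible stochastic matrix `P`
(`d = n + 2`), `Q = I − P`, cost vector `c̄`, cost matrix `C` and domain `D`.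
If `D` is nonempty then `C i j + C j i ≥ 0` for all `i, j` and the slice
`D_∘ = D ∩ {y_d = 0}` is compact.  If moreover `D` has nonempty interior then
`C i j + C j i > 0` for all `i ≠ j`. -/
theorem nonempty_domain_costs_and_compact_slice
    (n : ℕ)
    (P : Matrix (Fin (n + 2)) (Fin (n + 2)) ℝ)
    (c : Fin (n + 2) → ℝ)
    (hP0 : ∀ i j, 0 ≤ P i j)
    (hP1 : ∀ i, ∑ j, P i j = 1)
    (hirr : ∀ i j, ∃ k : ℕ, 1 ≤ k ∧ 0 < (P ^ k) i j)
    (C : Fin (n + 2) → Fin (n + 2) → ℝ)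
    (hCdiag : ∀ j, C j j = 0)
    (hCoff : ∀ (j : Fin (n + 2)) (k : Fin (n + 1)),
      C (j.succAbove k) j =
        (((1 - P).submatrix j.succAbove j.succAbove)⁻¹ *ᵥ fun l => c (j.succAbove l)) k)
    (D : Set (Fin (n + 2) → ℝ))
    (hD : D = {x | ∀ i, (∑ j, P i j * x j) - c i ≤ x i}) :
    (D.Nonempty →
      (∀ i j : Fin (n + 2), 0 ≤ C i j + C j i) ∧
      IsCompact (D ∩ {y | y (Fin.last (n + 1)) = 0})) ∧
    ((interior D).Nonempty →
      ∀ i j : Fin (n + 2), i ≠ j → 0 < C i j + C j i) := by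
  have hP : P.IsIrreducible := (isIrreducible_iff_exists_pow_pos hP0).2 hirr
  have hPone : P *ᵥ 1 = 1 := by
    funext i
    simpa [mulVec, dotProduct] using hP1 i
  have hC (j : Fin (n + 2)) : IsHittingCost P c j fun i => C i j :=
    (isHittingCost_iff_eq_inv_mulVec hP hPone j.succAbove_right_injective (Fin.range_succAbove j)).2
      ⟨hCdiag j, funext (hCoff j)⟩
  subst hD
  exact nonempty_domain_costs_and_compact_slice_general hP hPone hC (Fin.last (n + 1))
end

section
/- In the uncontrolled setting with an irreducible stochastic matrix P and invariant probability μ: for every 1 ≤ j ≤ d, the expected cost of an excursion from j back to j satisfies C̄_{j,j} = (∑_{i=1}^d μ_i c̄_i)/μ_j, where C̄_{j,j} := c̄_j + ∑_{ℓ≠j} P_{j,ℓ} C_{ℓ,j}. -/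
open Matrix Finset

/-!
Let `h` be the cost of reaching `j`, extended by `h j = 0`. First-step analysis says that
`c + P h - h` vanishes off `j`, while at `j` it is the excursion cost. Pairing it with `μ`
kills `P h - h` by invariance and leaves `μ j * (excursion cost) = ∑ i, μ i * c i`.

The equation for `h` is solvable because every proper principal submatrix of `1 - P` is
invertible. Extend a kernel vector by zero to `w`; then `|w| ≤ P |w|`, and pairing with the
positive invariant `μ` forces equality, so `|w|` is a nonnegative harmonic function with a zero.
By irreducibility it vanishes.
-/

section Algebra

variable {ι κ R : Type*} [Fintype ι] [Fintype κ]

theorem submatrix_mulVec_comp_of_support_subset [NonUnitalNonAssocSemiring R] {m o : Type*}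
    (M : Matrix m ι R) (f : o → m) {e : κ → ι} (he : Function.Injective e) {w : ι → R}
    (hw : Function.support w ⊆ Set.range e) :
    M.submatrix f e *ᵥ (w ∘ e) = (M *ᵥ w) ∘ f := by
  funext k
  refine Fintype.sum_of_injective e he _ _ (fun i hi => ?_) fun _ => rfl
  rw [Function.notMem_support.mp (Set.notMem_subset hw hi), mul_zero]

theorem eq_add_mulVec_of_eq_inv_submatrix_mulVec [CommRing R] [DecidableEq ι] [DecidableEq κ]
    {P : Matrix ι ι R} {e : κ → ι} (h_unit : IsUnit ((1 - P).submatrix e e))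
    (he : Function.Injective e) {c h : ι → R} (h_supp : Function.support h ⊆ Set.range e)
    (h_inv : h ∘ e = ((1 - P).submatrix e e)⁻¹ *ᵥ (c ∘ e)) (k : κ) :
    h (e k) = c (e k) + (P *ᵥ h) (e k) := by
  have h_poisson : ((1 - P) *ᵥ h) ∘ e = c ∘ e := by
    rw [← submatrix_mulVec_comp_of_support_subset _ _ he h_supp, h_inv, mulVec_mulVec,
      mul_nonsing_inv _ ((isUnit_iff_isUnit_det _).1 h_unit), one_mulVec]
  rw [sub_mulVec, one_mulVec] at h_poisson
  exact sub_eq_iff_eq_add.1 (congrFun h_poisson k)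

theorem sum_mul_return_cost_eq_dotProduct [Ring R] {P : Matrix ι ι R} {μ c h : ι → R}
    (hμ : μ ᵥ* P = μ) {s : Finset ι} (h_target : ∀ i ∈ s, h i = 0)
    (h_step : ∀ i ∉ s, h i = c i + (P *ᵥ h) i) :
    ∑ i ∈ s, μ i * (c i + (P *ᵥ h) i) = μ ⬝ᵥ c := by
  calc ∑ i ∈ s, μ i * (c i + (P *ᵥ h) i)
      = ∑ i ∈ s, μ i * (c + P *ᵥ h - h) i :=
        sum_congr rfl fun i hi => by simp [h_target i hi]
    _ = μ ⬝ᵥ (c + P *ᵥ h - h) :=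
        sum_subset (subset_univ s) fun i _ hi => by simp [← h_step i hi]
    _ = μ ⬝ᵥ c := by
        rw [dotProduct_sub, dotProduct_add, dotProduct_mulVec, hμ, add_sub_cancel_right]

theorem pow_mulVec_le_self [DecidableEq ι] [Semiring R] [PartialOrder R] [IsOrderedRing R]
    {P : Matrix ι ι R} (hP : ∀ i j, 0 ≤ P i j) {v : ι → R} (hv : P *ᵥ v ≤ v) (k : ℕ) :
    P ^ k *ᵥ v ≤ v := by
  induction k with
  | zero => rw [pow_zero, one_mulVec]
  | succ k ih =>
    rw [pow_succ', ← mulVec_mulVec]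
    have h_mono : P *ᵥ (P ^ k *ᵥ v) ≤ P *ᵥ v := fun i =>
      dotProduct_le_dotProduct_of_nonneg_left ih (hP i)
    exact h_mono.trans hv

end Algebra

section OrderedRing

variable {ι R : Type*} [Fintype ι] [Ring R] [LinearOrder R] [IsStrictOrderedRing R]
  {P : Matrix ι ι R}

theorem mulVec_eq_self_of_le_mulVec {μ v : ι → R} (hμ_pos : ∀ i, 0 < μ i) (hμ : μ ᵥ* P = μ)
    (hv : v ≤ P *ᵥ v) : P *ᵥ v = v := by
  have h_pairing : μ ⬝ᵥ v = μ ⬝ᵥ (P *ᵥ v) := by rw [dotProduct_mulVec, hμ]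
  have h_termwise := (sum_eq_sum_iff_of_le fun i _ =>
    mul_le_mul_of_nonneg_left (hv i) (hμ_pos i).le).1 h_pairing
  funext i
  exact (mul_left_cancel₀ (hμ_pos i).ne' (h_termwise i (mem_univ i))).symm

theorem abs_mulVec_le (hP : ∀ i j, 0 ≤ P i j) (w : ι → R) : |P *ᵥ w| ≤ P *ᵥ |w| := fun i =>
  (abs_sum_le_sum_abs _ _).trans_eq <|
    sum_congr rfl fun l _ => by rw [abs_mul, abs_of_nonneg (hP i l), Pi.abs_apply]

theorem abs_le_mulVec_abs_of_eq_zero_or_eq_mulVec (hP : ∀ i j, 0 ≤ P i j) {w : ι → R}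
    (hw : ∀ i, w i = 0 ∨ w i = (P *ᵥ w) i) : |w| ≤ P *ᵥ |w| := fun i => by
  rw [Pi.abs_apply]
  rcases hw i with h_zero | h_harmonic
  · rw [h_zero, abs_zero]
    exact dotProduct_nonneg_of_nonneg (hP i) (abs_nonneg w)
  · rw [h_harmonic]
    exact abs_mulVec_le hP w i

theorem eq_zero_of_mulVec_le_self_of_apply_eq_zero (hP : P.IsIrreducible) {v : ι → R}
    (hv_nonneg : 0 ≤ v) (hv : P *ᵥ v ≤ v) {j : ι} (hj : v j = 0) : v = 0 := by
  classical
  funext i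
  obtain ⟨k, -, hk⟩ := (isIrreducible_iff_exists_pow_pos hP.nonneg).1 hP j i
  have h_mul : (P ^ k) j i * v i ≤ 0 := calc
    (P ^ k) j i * v i ≤ (P ^ k *ᵥ v) j :=
      single_le_sum (f := fun l => (P ^ k) j l * v l)
        (fun l _ => mul_nonneg (pow_apply_nonneg hP.nonneg k j l) (hv_nonneg l)) (mem_univ i)
    _ ≤ v j := pow_mulVec_le_self hP.nonneg hv k j
    _ = 0 := hj
  exact (nonpos_of_mul_nonpos_right h_mul hk).antisymm (hv_nonneg i)

end OrderedRing

section OrderedField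

variable {ι κ R : Type*} [Fintype ι] [DecidableEq ι] [Fintype κ] [DecidableEq κ]
  [Field R] [LinearOrder R] [IsStrictOrderedRing R] {P : Matrix ι ι R} {μ : ι → R} {e : κ → ι}

theorem isUnit_submatrix_one_sub_of_isIrreducible (hP : P.IsIrreducible)
    (hμ_pos : ∀ i, 0 < μ i) (hμ : μ ᵥ* P = μ) (he : Function.Injective e)
    (he_proper : ¬ Function.Surjective e) : IsUnit ((1 - P).submatrix e e) := by
  rw [← mulVec_injective_iff_isUnit]
  refine (injective_iff_map_eq_zero ((1 - P).submatrix e e).mulVecLin).2 fun v hv => ?_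
  let w : ι → R := Function.extend e v fun _ => 0
  have hw_off : ∀ i ∉ Set.range e, w i = 0 := fun i hi => Function.extend_apply' _ _ i hi
  have hw_comp : w ∘ e = v := Function.extend_comp he _ _
  have hw_harmonic : ∀ k, w (e k) = (P *ᵥ w) (e k) := fun k => by
    rw [mulVecLin_apply, ← hw_comp, submatrix_mulVec_comp_of_support_subset _ _ he
      (Function.support_subset_iff'.2 hw_off), sub_mulVec, one_mulVec] at hv
    exact sub_eq_zero.1 (congrFun hv k)
  have hw_sub : |w| ≤ P *ᵥ |w| := abs_le_mulVec_abs_of_eq_zero_or_eq_mulVec hP.nonneg fun i => by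
    by_cases hi : i ∈ Set.range e
    · obtain ⟨k, rfl⟩ := hi
      exact Or.inr (hw_harmonic k)
    · exact Or.inl (hw_off i hi)
  obtain ⟨j, hj⟩ := not_forall.1 he_proper
  have hw_abs : |w| = 0 := eq_zero_of_mulVec_le_self_of_apply_eq_zero hP (abs_nonneg w)
    (mulVec_eq_self_of_le_mulVec hμ_pos hμ hw_sub).le (j := j) (by simp [hw_off j hj])
  have hw : w = 0 := funext fun i => abs_eq_zero.1 (congrFun hw_abs i)
  rw [← hw_comp, hw, Pi.zero_comp]

theorem excursion_cost_eq_mean_cost_div_invariant_general (hP : P.IsIrreducible)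
    (hμ_pos : ∀ i, 0 < μ i) (hμ : μ ᵥ* P = μ) {j : ι} (he : Function.Injective e)
    (he_range : Set.range e = {j}ᶜ) {c C : ι → R}
    (hC : ∀ k, C (e k) = (((1 - P).submatrix e e)⁻¹ *ᵥ (c ∘ e)) k) :
    c j + ∑ ℓ with ℓ ≠ j, P j ℓ * C ℓ = (μ ⬝ᵥ c) / μ j := by
  let h : ι → R := Function.update C j 0
  have he_ne : ∀ k, e k ≠ j := fun k => he_range.le (Set.mem_range_self k)
  have h_unit : IsUnit ((1 - P).submatrix e e) :=
    isUnit_submatrix_one_sub_of_isIrreducible hP hμ_pos hμ he fun he_surj =>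
      (he_surj j).elim he_ne
  have h_step : ∀ i ∉ ({j} : Finset ι), h i = c i + (P *ᵥ h) i := fun i hi => by
    obtain ⟨k, rfl⟩ : i ∈ Set.range e := by simpa [he_range] using hi
    refine eq_add_mulVec_of_eq_inv_submatrix_mulVec h_unit he ?_ (funext fun l => ?_) k
    · simp [he_range, h]
    · exact (Function.update_of_ne (he_ne l) 0 C).trans (hC l)
  have h_sum : ∑ ℓ with ℓ ≠ j, P j ℓ * C ℓ = (P *ᵥ h) j := by
    rw [sum_filter]
    exact sum_congr rfl fun ℓ _ => by by_cases hℓ : ℓ = j <;> simp [h, hℓ]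
  have h_balance := sum_mul_return_cost_eq_dotProduct (s := {j}) hμ (by simp [h]) h_step
  rw [sum_singleton] at h_balance
  rw [h_sum, eq_div_iff (hμ_pos j).ne', mul_comm, h_balance]

end OrderedField

/-- Uncontrolled setting with an irreducible stochastic matrix `P`
(`d = n + 2`), invariant probability `μ`, cost vector `c̄` and cost matrix `C`.
For every `j`, the expected cost of an excursion from `j` back to `j` satisfies
`C̄_{j,j} = (∑ i, μ i * c̄ i) / μ j`, where `C̄_{j,j} := c̄ j + ∑_{ℓ ≠ j} P j ℓ * C ℓ j`. -/
theorem excursion_cost_eq_mean_cost_div_invariant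
    (n : ℕ)
    (P : Matrix (Fin (n + 2)) (Fin (n + 2)) ℝ)
    (c : Fin (n + 2) → ℝ) (μ : Fin (n + 2) → ℝ)
    (hP0 : ∀ i j, 0 ≤ P i j)
    (hP1 : ∀ i, ∑ j, P i j = 1)
    (hirr : ∀ i j, ∃ k : ℕ, 1 ≤ k ∧ 0 < (P ^ k) i j)
    (hμpos : ∀ i, 0 < μ i)
    (hμsum : ∑ i, μ i = 1)
    (hμinv : ∀ j, ∑ i, μ i * P i j = μ j)
    (C : Fin (n + 2) → Fin (n + 2) → ℝ)
    (hCdiag : ∀ j, C j j = 0)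
    (hCoff : ∀ (j : Fin (n + 2)) (k : Fin (n + 1)),
      C (j.succAbove k) j =
        (((1 - P).submatrix j.succAbove j.succAbove)⁻¹ *ᵥ fun l => c (j.succAbove l)) k) :
    ∀ j : Fin (n + 2),
      c j + ∑ ℓ ∈ Finset.univ.filter (fun ℓ => ℓ ≠ j), P j ℓ * C ℓ j =
        (∑ i, μ i * c i) / μ j := fun j =>
  excursion_cost_eq_mean_cost_div_invariant_general
    ((isIrreducible_iff_exists_pow_pos hP0).2 hirr) hμpos (funext hμinv)
    Fin.succAbove_right_injective (Fin.range_succAbove j) (hCoff j)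
end

section
/- In the uncontrolled setting with an irreducible stochastic matrix P and invariant probability μ: for all 1 ≤ i ≠ j ≤ d, C_{i,j} + C_{j,i} = ((∑_{k=1}^d μ_k c̄_k)/μ_i) · ((Q^{(j,j)})^{-1})_{i^{(j)}, i^{(j)}}. -/
open Matrix

/-!
Write `Q = 1 - P` and `m = ∑ μ c̄`. Column `u` of the cost matrix with target `j` solves the
Poisson equation `Q u = c̄` off `j`; pairing with `μ`, which annihilates the range of `Q`, gives
`Q u = c̄ - (m / μ j) δ_j` everywhere. If `v` is the column with target `i ≠ j`, then `u - v + v j`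
vanishes at `j` and `Q` maps it to `(m / μ i) δ_i` off `j`. It is therefore `m / μ i` times column
`i` of the inverse of the reduced matrix `Q^{(j,j)}`, and its value at `i` is `u i + v j`.
-/

section MaximumPrinciple

variable {ι R : Type*} [Fintype ι] [DecidableEq ι]

theorem pow_mulVec_eq_self [Semiring R] {P : Matrix ι ι R} {y : ι → R} (hy : P *ᵥ y = y) (k : ℕ) :
    (P ^ k) *ᵥ y = y := by
  induction k with
  | zero => rw [pow_zero, one_mulVec]
  | succ k ih => rw [pow_succ, ← mulVec_mulVec, hy, ih]

variable [Ring R] [LinearOrder R] [IsStrictOrderedRing R] {P : Matrix ι ι R} {y : ι → R}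

theorem eq_of_mulVec_eq_self_of_forall_le (hP : P ∈ rowStochastic R ι) (hy : P *ᵥ y = y) {s t : ι}
    (hmax : ∀ r, y r ≤ y s) (hst : 0 < P s t) : y t = y s := by
  have hsum : ∑ r, P s r * (y s - y r) = 0 := by
    have hys : ∑ r, P s r * y r = y s := congrFun hy s
    rw [Finset.sum_congr rfl fun r _ => mul_sub (P s r) (y s) (y r), Finset.sum_sub_distrib,
      ← Finset.sum_mul, sum_row_of_mem_rowStochastic hP, one_mul, hys, sub_self]
  have hterm : P s t * (y s - y t) = 0 :=
    (Finset.sum_eq_zero_iff_of_nonneg fun r _ =>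
      mul_nonneg (nonneg_of_mem_rowStochastic hP) (sub_nonneg.2 (hmax r))).1 hsum t
        (Finset.mem_univ t)
  exact (sub_eq_zero.1 ((mul_eq_zero.1 hterm).resolve_left hst.ne')).symm

theorem mulVec_eq_self_iff_forall_eq (hP : P ∈ rowStochastic R ι)
    (hirr : ∀ s t, ∃ k : ℕ, 0 < (P ^ k) s t) :
    P *ᵥ y = y ↔ ∀ s t, y s = y t := by
  constructor
  · intro hy s t
    have : Nonempty ι := ⟨s⟩
    obtain ⟨a, ha⟩ := Finite.exists_max y
    have eq_max : ∀ r, y r = y a := fun r => by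
      obtain ⟨k, hk⟩ := hirr a r
      exact eq_of_mulVec_eq_self_of_forall_le (pow_mem hP k) (pow_mulVec_eq_self hy k) ha hk
    rw [eq_max s, eq_max t]
  · intro hy
    ext s
    rw [mulVec, dotProduct, Finset.sum_congr rfl fun t _ => by rw [hy t s], ← Finset.sum_mul,
      sum_row_of_mem_rowStochastic hP, one_mul]

theorem one_sub_mulVec_eq_zero_iff_forall_eq (hP : P ∈ rowStochastic R ι)
    (hirr : ∀ s t, ∃ k : ℕ, 0 < (P ^ k) s t) (y : ι → R) :
    (1 - P) *ᵥ y = 0 ↔ ∀ s t, y s = y t := by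
  rw [sub_mulVec, one_mulVec, sub_eq_zero, eq_comm, mulVec_eq_self_iff_forall_eq hP hirr]

end MaximumPrinciple

theorem vecMul_one_sub_eq_zero {ι R : Type*} [Fintype ι] [DecidableEq ι] [Ring R]
    {P : Matrix ι ι R} {μ : ι → R} (hμ : μ ᵥ* P = μ) : μ ᵥ* (1 - P) = 0 := by
  rw [vecMul_sub, vecMul_one, hμ, sub_self]

theorem submatrix_mulVec_comp_of_support {ι κ ν τ R : Type*} [Fintype ι] [Fintype κ]
    [NonUnitalNonAssocSemiring R] (Q : Matrix ν ι R) (f : τ → ν) {e : κ → ι}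
    (he : Function.Injective e) {y : ι → R} (hy : ∀ s ∉ Set.range e, y s = 0) :
    Q.submatrix f e *ᵥ (y ∘ e) = (Q *ᵥ y) ∘ f := by
  ext k
  exact Fintype.sum_of_injective e he _ _ (fun s hs => by rw [hy s hs, mul_zero]) fun _ => rfl

/-- `u` is a vector of expected costs accumulated until the state `j` is reached, by a chain with
transition matrix `1 - Q` (or generator `-Q`) and running cost `c`. It is encoded by the boundary
value at `j` and the first-step equations off `j`. -/
structure IsHittingCost_s7 {ι R : Type*} [Fintype ι] [NonUnitalNonAssocSemiring R] (Q : Matrix ι ι R)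
    (c : ι → R) (j : ι) (u : ι → R) : Prop where
  apply_self : u j = 0
  mulVec_apply : ∀ s ≠ j, (Q *ᵥ u) s = c s

section HittingCost

variable {ι κ K : Type*} [Fintype ι] [Fintype κ] [DecidableEq κ] {e : κ → ι} {j : ι}

theorem isHittingCost_of_eq_inv_mulVec [CommRing K] {Q : Matrix ι ι K} {c u : ι → K}
    (he : Function.Injective e) (hrange : Set.range e = {j}ᶜ)
    (hunit : IsUnit (Q.submatrix e e)) (huj : u j = 0)
    (hu : ∀ k, u (e k) = ((Q.submatrix e e)⁻¹ *ᵥ (c ∘ e)) k) : IsHittingCost_s7 Q c j u where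
  apply_self := huj
  mulVec_apply s hs := by
    obtain ⟨k, rfl⟩ : s ∈ Set.range e := hrange ▸ hs
    have hsupp : ∀ t ∉ Set.range e, u t = 0 := by simpa [hrange] using huj
    have hue : u ∘ e = (Q.submatrix e e)⁻¹ *ᵥ (c ∘ e) := funext hu
    have hreduced : (Q *ᵥ u) ∘ e = c ∘ e := by
      rw [← submatrix_mulVec_comp_of_support Q e he hsupp, hue, mulVec_mulVec,
        mul_nonsing_inv _ ((isUnit_iff_isUnit_det _).1 hunit), one_mulVec]
    exact congrFun hreduced k

variable [Field K] {Q : Matrix ι ι K} {μ : ι → K}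

theorem IsHittingCost_s7.mulVec_eq_sub_single [DecidableEq ι] {c u : ι → K}
    (hu : IsHittingCost_s7 Q c j u) (hμ : μ ᵥ* Q = 0) (hμj : μ j ≠ 0) :
    Q *ᵥ u = c - Pi.single j (μ ⬝ᵥ c / μ j) := by
  obtain ⟨a, ha⟩ : ∃ a, c - Q *ᵥ u = Pi.single j a :=
    ⟨(c - Q *ᵥ u) j, by
      ext s
      obtain rfl | hs := eq_or_ne s j
      · rw [Pi.single_eq_same]
      · rw [Pi.single_eq_of_ne hs, Pi.sub_apply, hu.mulVec_apply s hs, sub_self]⟩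
  have hpair : μ ⬝ᵥ c = μ j * a := by
    rw [← dotProduct_single, ← ha, dotProduct_sub, dotProduct_mulVec, hμ, zero_dotProduct, sub_zero]
  rw [hpair, mul_div_cancel_left₀ a hμj, ← ha, sub_sub_cancel]

theorem isUnit_submatrix_of_forall_eq_of_mulVec_eq_zero
    (hker : ∀ y, Q *ᵥ y = 0 → ∀ s t, y s = y t) (hμ : μ ᵥ* Q = 0) (hμj : μ j ≠ 0)
    (he : Function.Injective e) (hrange : Set.range e = {j}ᶜ) : IsUnit (Q.submatrix e e) := by
  classical
  rw [← mulVec_injective_iff_isUnit, ← coe_mulVecLin, injective_iff_map_eq_zero]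
  intro x hx
  let y : ι → K := Function.extend e x 0
  have hye : y ∘ e = x := Function.extend_comp he x _
  have hsupp : ∀ s ∉ Set.range e, y s = 0 := fun s hs => Function.extend_apply' x _ s hs
  have hyj : y j = 0 := hsupp j (by simp [hrange])
  have hreduced : (Q *ᵥ y) ∘ e = 0 := by
    rw [← submatrix_mulVec_comp_of_support Q e he hsupp, hye]
    exact hx
  have hy : IsHittingCost_s7 Q 0 j y := ⟨hyj, fun s hs => by
    obtain ⟨k, rfl⟩ : s ∈ Set.range e := hrange ▸ hs
    exact congrFun hreduced k⟩
  have hQy : Q *ᵥ y = 0 := by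
    rw [hy.mulVec_eq_sub_single hμ hμj, dotProduct_zero, zero_div, Pi.single_zero, sub_zero]
  rw [← hye]
  exact funext fun k => (hker y hQy (e k) j).trans hyj

theorem IsHittingCost_s7.add_eq_div_mul_inv_apply {c u v : ι → K} {k : κ}
    (hconst : ∀ a : K, (Q *ᵥ fun _ => a) = 0) (hμ : μ ᵥ* Q = 0) (hμk : μ (e k) ≠ 0)
    (he : Function.Injective e) (hrange : Set.range e = {j}ᶜ) (hunit : IsUnit (Q.submatrix e e))
    (hu : IsHittingCost_s7 Q c j u) (hv : IsHittingCost_s7 Q c (e k) v) :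
    u (e k) + v j = μ ⬝ᵥ c / μ (e k) * (Q.submatrix e e)⁻¹ k k := by
  classical
  let w : ι → K := u - v + fun _ => v j
  have hwj : w j = 0 := by simp [w, hu.apply_self]
  have hsupp : ∀ s ∉ Set.range e, w s = 0 := by simpa [hrange] using hwj
  have hQw : (Q *ᵥ w) ∘ e = Pi.single k (μ ⬝ᵥ c / μ (e k)) := by
    ext l
    have hl : e l ≠ j := (Set.ext_iff.1 hrange (e l)).1 (Set.mem_range_self l)
    simp only [Function.comp_apply, w, mulVec_add, mulVec_sub, hconst, add_zero, Pi.sub_apply,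
      hu.mulVec_apply _ hl, hv.mulVec_eq_sub_single hμ hμk, sub_sub_cancel]
    simp only [Pi.single_apply, he.eq_iff]
  have hwe : w ∘ e = (Q.submatrix e e)⁻¹ *ᵥ Pi.single k (μ ⬝ᵥ c / μ (e k)) := by
    rw [← hQw, ← submatrix_mulVec_comp_of_support Q e he hsupp, mulVec_mulVec,
      nonsing_inv_mul _ ((isUnit_iff_isUnit_det _).1 hunit), one_mulVec]
  calc u (e k) + v j = (w ∘ e) k := by simp [w, hv.apply_self]
    _ = μ ⬝ᵥ c / μ (e k) * (Q.submatrix e e)⁻¹ k k := by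
      rw [hwe, mulVec_single, Pi.smul_apply, col_apply, op_smul_eq_mul, mul_comm]

end HittingCost

theorem cost_roundtrip_eq_mean_cost_formula_general {ι K : Type*} [Fintype ι] [Field K]
    {κ : ι → Type*} [∀ j, Fintype (κ j)] [∀ j, DecidableEq (κ j)]
    (e : ∀ j, κ j → ι) (he : ∀ j, Function.Injective (e j)) (hrange : ∀ j, Set.range (e j) = {j}ᶜ)
    (Q : Matrix ι ι K) (c μ : ι → K) (hker : ∀ y, Q *ᵥ y = 0 ↔ ∀ s t, y s = y t)
    (hμ : μ ᵥ* Q = 0) (hμ0 : ∀ s, μ s ≠ 0) (C : ι → ι → K) (hCdiag : ∀ j, C j j = 0)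
    (hCoff : ∀ j k, C (e j k) j = ((Q.submatrix (e j) (e j))⁻¹ *ᵥ fun l => c (e j l)) k)
    (j : ι) (k : κ j) :
    C (e j k) j + C j (e j k) =
      (∑ s, μ s * c s) / μ (e j k) * (Q.submatrix (e j) (e j))⁻¹ k k := by
  have hunit : ∀ i, IsUnit (Q.submatrix (e i) (e i)) := fun i =>
    isUnit_submatrix_of_forall_eq_of_mulVec_eq_zero (fun y => (hker y).1) hμ (hμ0 i) (he i)
      (hrange i)
  have hcost : ∀ i, IsHittingCost_s7 Q c i fun s => C s i := fun i =>
    isHittingCost_of_eq_inv_mulVec (he i) (hrange i) (hunit i) (hCdiag i) (hCoff i)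
  exact (hcost j).add_eq_div_mul_inv_apply (fun a => (hker _).2 fun _ _ => rfl) hμ (hμ0 _) (he j)
    (hrange j) (hunit j) (hcost _)

/-- Uncontrolled setting with an irreducible stochastic matrix `P`
(`d = n + 2`), invariant probability `μ`, cost vector `c̄` and cost matrix `C`.
For all `i ≠ j` (every such `i` is `j.succAbove k` for a unique `k`, and `k = i^{(j)}`):
`C i j + C j i = ((∑ μ c̄) / μ i) * ((Q^{(j,j)})⁻¹)_{i^{(j)}, i^{(j)}}`. -/
theorem cost_roundtrip_eq_mean_cost_formula
    (n : ℕ)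
    (P : Matrix (Fin (n + 2)) (Fin (n + 2)) ℝ)
    (c : Fin (n + 2) → ℝ) (μ : Fin (n + 2) → ℝ)
    (hP0 : ∀ i j, 0 ≤ P i j)
    (hP1 : ∀ i, ∑ j, P i j = 1)
    (hirr : ∀ i j, ∃ k : ℕ, 1 ≤ k ∧ 0 < (P ^ k) i j)
    (hμpos : ∀ i, 0 < μ i)
    (hμsum : ∑ i, μ i = 1)
    (hμinv : ∀ j, ∑ i, μ i * P i j = μ j)
    (C : Fin (n + 2) → Fin (n + 2) → ℝ)
    (hCdiag : ∀ j, C j j = 0)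
    (hCoff : ∀ (j : Fin (n + 2)) (k : Fin (n + 1)),
      C (j.succAbove k) j =
        (((1 - P).submatrix j.succAbove j.succAbove)⁻¹ *ᵥ fun l => c (j.succAbove l)) k) :
    ∀ (j : Fin (n + 2)) (k : Fin (n + 1)),
      C (j.succAbove k) j + C j (j.succAbove k) =
        ((∑ i, μ i * c i) / μ (j.succAbove k)) *
          (((1 - P).submatrix j.succAbove j.succAbove)⁻¹ k k) :=
  cost_roundtrip_eq_mean_cost_formula_general (fun j => j.succAbove)
    (fun _ => Fin.succAbove_right_injective) Fin.range_succAbove (1 - P) c μ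
    (one_sub_mulVec_eq_zero_iff_forall_eq (mem_rowStochastic_iff_sum.2 ⟨hP0, hP1⟩)
      fun s t => (hirr s t).imp fun _ => And.right)
    (vecMul_one_sub_eq_zero (funext hμinv)) (fun s => (hμpos s).ne') C hCdiag hCoff
end

section
/- In the uncontrolled setting with an irreducible stochastic matrix P and invariant probability μ, the following four conditions are equivalent: (i) the domain D has nonempty interior; (ii) there exist 1 ≤ i ≠ j ≤ d such that C_{i,j} + C_{j,i} > 0; (iii) ∑_{i=1}^d μ_i c̄_i > 0; (iv) for all 1 ≤ i ≠ j ≤ d, C_{i,j} + C_{j,i} > 0. -/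
open Matrix

/-!
Write `Q = 1 - P`. A vector `x` with `Q x ≥ 0` off a state `j` attains its minimum at `j`: as long
as it has not met `j`, the chain started at a minimum can only move to other minima.

Column `j` of the cost matrix solves `Q C = c` off `j`. Pairing with the invariant measure, which
`Q` annihilates from the left, gives the missing diagonal entry: `Q C = c 1ᵀ - ⟨μ, c⟩ diag(μ)⁻¹`.
The difference `u` of columns `j` and `i` therefore satisfies
`Q u = ⟨μ, c⟩ (eᵢ / μ i - eⱼ / μ j)`, and the minimum principle shows that
`u i - u j = C i j + C j i` is positive exactly when `⟨μ, c⟩` is.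

The interior of `{Q x + c ≥ 0}` is `{Q x + c > 0}`, and `⟨μ, Q x + c⟩ = ⟨μ, c⟩`, so nonempty
interior forces `⟨μ, c⟩ > 0`. Conversely the `μ`-average of the columns of `-C` gives a vector for
which `Q x + c` is a positive constant.
-/

section Interior

variable {𝕜 m n : Type*} [Field 𝕜] [LinearOrder 𝕜] [IsStrictOrderedRing 𝕜] [TopologicalSpace 𝕜]
  [OrderTopology 𝕜] [Finite m] [Fintype n]

theorem interior_setOf_nonneg_mulVec_add {A : Matrix m n 𝕜} (hA : ∀ i, A i ≠ 0) (c : m → 𝕜) :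
    interior {x | 0 ≤ A *ᵥ x + c} = {x | ∀ i, 0 < (A *ᵥ x + c) i} := by
  classical
  apply subset_antisymm
  · intro x hx i
    obtain ⟨j, hij⟩ := Function.ne_iff.1 (hA i)
    -- Moving `x` by `-ε * A i j` along the `j`-th axis lowers `(A x + c) i` by `ε * (A i j) ^ 2`.
    have hcont : Continuous fun ε : 𝕜 ↦ x - ε • Pi.single j (A i j) := by fun_prop
    have hmem : ∀ᶠ ε in nhdsWithin (0 : 𝕜) (Set.Ioi 0),
        x - ε • Pi.single j (A i j) ∈ {x | 0 ≤ A *ᵥ x + c} :=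
      nhdsWithin_le_nhds <| hcont.continuousAt.eventually_mem <| by
        simpa using mem_interior_iff_mem_nhds.1 hx
    obtain ⟨ε, hε, hεpos⟩ := (hmem.and self_mem_nhdsWithin).exists
    have hgap : 0 < ε * (A i j * A i j) := mul_pos hεpos (mul_self_pos.2 hij)
    have hshift := hε i
    simp only [mulVec_sub, mulVec_smul, mulVec_single, Pi.add_apply, Pi.sub_apply, Pi.smul_apply,
      Pi.zero_apply, smul_eq_mul, MulOpposite.smul_eq_mul_unop, MulOpposite.unop_op,
      col_apply] at hshift ⊢
    linarith
  · refine interior_maximal (fun x hx i ↦ (hx i).le) ?_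
    simp only [Set.ofPred_forall]
    exact isOpen_iInter_of_finite fun i ↦ isOpen_lt continuous_const (by fun_prop)

end Interior

section MinimumPrinciple

theorem one_sub_mulVec_apply_eq_sum {R ι : Type*} [Ring R] [Fintype ι] [DecidableEq ι]
    {P : Matrix ι ι R} {i : ι} (hPi : ∑ j, P i j = 1) (x : ι → R) :
    ((1 - P) *ᵥ x) i = ∑ l, P i l * (x i - x l) := by
  rw [sub_mulVec, one_mulVec, Pi.sub_apply, mulVec, dotProduct]
  simp only [mul_sub, Finset.sum_sub_distrib, ← Finset.sum_mul, hPi, one_mul]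

variable {R ι : Type*} [Ring R] [LinearOrder R] [IsStrictOrderedRing R] [Fintype ι]
  [DecidableEq ι] {P : Matrix ι ι R} {x : ι → R} {i j : ι}

theorem one_sub_mulVec_apply_nonpos_of_forall_le (hP : P ∈ rowStochastic R ι)
    (hmin : ∀ l, x i ≤ x l) : ((1 - P) *ᵥ x) i ≤ 0 := by
  rw [one_sub_mulVec_apply_eq_sum (sum_row_of_mem_rowStochastic hP i)]
  exact Finset.sum_nonpos fun l _ ↦
    mul_nonpos_of_nonneg_of_nonpos (nonneg_of_mem_rowStochastic hP) (sub_nonpos.2 (hmin l))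

theorem eq_of_forall_le_of_one_sub_mulVec_apply_nonneg (hP : P ∈ rowStochastic R ι)
    (hmin : ∀ l, x i ≤ x l) (hxi : 0 ≤ ((1 - P) *ᵥ x) i) (hij : 0 < P i j) : x j = x i := by
  have hsum : ∑ l, P i l * (x i - x l) = 0 := by
    rw [← one_sub_mulVec_apply_eq_sum (sum_row_of_mem_rowStochastic hP i)]
    exact (one_sub_mulVec_apply_nonpos_of_forall_le hP hmin).antisymm hxi
  have hterm : P i j * (x i - x j) = 0 :=
    (Finset.sum_eq_zero_iff_of_nonpos fun l _ ↦ mul_nonpos_of_nonneg_of_nonpos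
      (nonneg_of_mem_rowStochastic hP) (sub_nonpos.2 (hmin l))).1 hsum j (Finset.mem_univ j)
  exact (sub_eq_zero.1 ((mul_eq_zero.1 hterm).resolve_left hij.ne')).symm

theorem exists_pos_mul_pos_of_pow_succ_apply_pos {A : Matrix ι ι R} (hA : ∀ i j, 0 ≤ A i j)
    {k : ℕ} (h : 0 < (A ^ (k + 1)) i j) : ∃ l, 0 < A i l ∧ 0 < (A ^ k) l j := by
  rw [pow_succ', mul_apply] at h
  obtain ⟨l, -, hl⟩ := (Finset.sum_pos_iff_of_nonneg fun l _ ↦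
    mul_nonneg (hA i l) (pow_apply_nonneg hA k l j)).1 h
  have hil : 0 < A i l := pos_of_mul_pos_left hl (pow_apply_nonneg hA k l j)
  exact ⟨l, hil, (mul_pos_iff_of_pos_left hil).1 hl⟩

theorem eq_of_forall_le_of_pow_apply_pos (hP : P ∈ rowStochastic R ι)
    (hx : ∀ l, l ≠ j → 0 ≤ ((1 - P) *ᵥ x) l) {k : ℕ} (hmin : ∀ l, x i ≤ x l)
    (hk : 0 < (P ^ k) i j) : x j = x i := by
  induction k generalizing i with
  | zero =>
    rcases eq_or_ne i j with rfl | hij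
    · rfl
    · simp [hij] at hk
  | succ k ih =>
    rcases eq_or_ne i j with rfl | hij
    · rfl
    obtain ⟨l, hil, hlj⟩ := exists_pos_mul_pos_of_pow_succ_apply_pos hP.1 hk
    have hl : x l = x i := eq_of_forall_le_of_one_sub_mulVec_apply_nonneg hP hmin (hx i hij) hil
    exact (ih (hl ▸ hmin) hlj).trans hl

theorem apply_le_of_one_sub_mulVec_nonneg_off (hP : P ∈ rowStochastic R ι)
    (hj : ∀ i, ∃ k : ℕ, 0 < (P ^ k) i j) (hx : ∀ l, l ≠ j → 0 ≤ ((1 - P) *ᵥ x) l) (i : ι) :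
    x j ≤ x i := by
  have : Nonempty ι := ⟨j⟩
  obtain ⟨m, hmin⟩ := Finite.exists_min x
  obtain ⟨k, hk⟩ := hj m
  exact (eq_of_forall_le_of_pow_apply_pos hP hx hmin hk).trans_le (hmin i)

theorem apply_lt_of_one_sub_mulVec_nonneg_off (hP : P ∈ rowStochastic R ι)
    (hj : ∀ i, ∃ k : ℕ, 0 < (P ^ k) i j) (hx : ∀ l, l ≠ j → 0 ≤ ((1 - P) *ᵥ x) l)
    (hi : 0 < ((1 - P) *ᵥ x) i) : x j < x i := by
  by_contra! hle
  refine hi.not_ge (one_sub_mulVec_apply_nonpos_of_forall_le hP fun l ↦ hle.trans ?_)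
  exact apply_le_of_one_sub_mulVec_nonneg_off hP hj hx l

theorem diag_lt_one_of_pow_apply_pos (hP : P ∈ rowStochastic R ι)
    (hj : ∀ i, ∃ k : ℕ, 0 < (P ^ k) i j) (hij : i ≠ j) : P i i < 1 := by
  by_contra! hii
  have hx : ∀ l, l ≠ j → 0 ≤ ((1 - P) *ᵥ -Pi.single i 1) l := by
    intro l _
    rcases eq_or_ne l i with rfl | hli
    · simpa [mulVec_neg] using hii
    · simpa [mulVec_neg, hli] using nonneg_of_mem_rowStochastic hP
  have hle := apply_le_of_one_sub_mulVec_nonneg_off hP hj hx i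
  simp only [Pi.neg_apply, Pi.single_eq_same, Pi.single_eq_of_ne' hij, neg_le_neg_iff] at hle
  exact zero_lt_one.not_ge hle

end MinimumPrinciple

theorem submatrix_succAbove_mulVec {R m o : Type*} [NonUnitalNonAssocSemiring R] {n : ℕ}
    (A : Matrix m (Fin (n + 1)) R) (f : o → m) (j : Fin (n + 1)) (v : Fin n → R) :
    A.submatrix f j.succAbove *ᵥ v = (A *ᵥ j.insertNth (0 : R) v) ∘ f := by
  ext k
  simp [mulVec, dotProduct, Fin.sum_univ_succAbove _ j]

theorem nonneg_of_submatrix_one_sub_mulVec_nonneg {R : Type*} [Ring R] [LinearOrder R]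
    [IsStrictOrderedRing R] {n : ℕ} {P : Matrix (Fin (n + 1)) (Fin (n + 1)) R} {j : Fin (n + 1)}
    (hP : P ∈ rowStochastic R (Fin (n + 1))) (hj : ∀ i, ∃ k : ℕ, 0 < (P ^ k) i j) {v : Fin n → R}
    (hv : 0 ≤ (1 - P).submatrix j.succAbove j.succAbove *ᵥ v) : 0 ≤ v := by
  rw [submatrix_succAbove_mulVec] at hv
  have hx : ∀ l, l ≠ j → 0 ≤ ((1 - P) *ᵥ j.insertNth (0 : R) v) l := by
    intro l hl
    obtain ⟨k, rfl⟩ := Fin.exists_succAbove_eq hl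
    exact hv k
  intro k
  simpa using apply_le_of_one_sub_mulVec_nonneg_off hP hj hx (j.succAbove k)

theorem isUnit_submatrix_one_sub_s9 {𝕜 : Type*} [Field 𝕜] [LinearOrder 𝕜] [IsStrictOrderedRing 𝕜]
    {n : ℕ} {P : Matrix (Fin (n + 1)) (Fin (n + 1)) 𝕜} {j : Fin (n + 1)}
    (hP : P ∈ rowStochastic 𝕜 (Fin (n + 1))) (hj : ∀ i, ∃ k : ℕ, 0 < (P ^ k) i j) :
    IsUnit ((1 - P).submatrix j.succAbove j.succAbove) := by
  rw [← mulVec_injective_iff_isUnit]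
  have le_of_eq {v w : Fin n → 𝕜} (h : (1 - P).submatrix j.succAbove j.succAbove *ᵥ v =
      (1 - P).submatrix j.succAbove j.succAbove *ᵥ w) : v ≤ w :=
    sub_nonneg.1 <| nonneg_of_submatrix_one_sub_mulVec_nonneg hP hj <| by
      rw [mulVec_sub, h, sub_self]
  exact fun v w h ↦ (le_of_eq h).antisymm (le_of_eq h.symm)

/-- `C` is the matrix of expected costs for reaching one state from another: `C i j` is the
accumulated cost `c` of the chain `P` started at `i` until it hits `j`. This is encoded by the
first-step equations, with `1 - P` acting on each column of `C`. -/
structure IsHittingCost_s9 {R ι : Type*} [Ring R] [Fintype ι] [DecidableEq ι] (P : Matrix ι ι R)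
    (c : ι → R) (C : Matrix ι ι R) : Prop where
  apply_self (j : ι) : C j j = 0
  one_sub_mul_apply {i j : ι} (hij : i ≠ j) : ((1 - P) * C) i j = c i

namespace IsHittingCost_s9

theorem of_submatrix_inv {𝕜 : Type*} [Field 𝕜] [LinearOrder 𝕜] [IsStrictOrderedRing 𝕜] {n : ℕ}
    {P C : Matrix (Fin (n + 1)) (Fin (n + 1)) 𝕜} {c : Fin (n + 1) → 𝕜}
    (hP : P ∈ rowStochastic 𝕜 (Fin (n + 1))) (hirr : ∀ i j, ∃ k : ℕ, 0 < (P ^ k) i j)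
    (hdiag : ∀ j, C j j = 0)
    (hoff : ∀ j k, C (j.succAbove k) j =
      (((1 - P).submatrix j.succAbove j.succAbove)⁻¹ *ᵥ fun l ↦ c (j.succAbove l)) k) :
    IsHittingCost_s9 P c C where
  apply_self := hdiag
  one_sub_mul_apply {i j} hij := by
    obtain ⟨k, rfl⟩ := Fin.exists_succAbove_eq hij
    set A := (1 - P).submatrix j.succAbove j.succAbove with hA
    have hdet : IsUnit A.det :=
      (isUnit_iff_isUnit_det A).1 (isUnit_submatrix_one_sub_s9 hP fun i ↦ hirr i j)
    have hcol : C.col j = j.insertNth (0 : 𝕜) (A⁻¹ *ᵥ fun l ↦ c (j.succAbove l)) :=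
      (Fin.insertNth_eq_iff.2 ⟨(hdiag j).symm, funext fun l ↦ (hoff j l).symm⟩).symm
    have hsolve : A *ᵥ (A⁻¹ *ᵥ fun l ↦ c (j.succAbove l)) = fun l ↦ c (j.succAbove l) := by
      rw [mulVec_mulVec, mul_nonsing_inv A hdet, one_mulVec]
    rw [hA, submatrix_succAbove_mulVec, ← hA, ← hcol] at hsolve
    exact congrFun hsolve k

section Field

variable {𝕜 ι : Type*} [Field 𝕜] [Fintype ι] [DecidableEq ι] {P C : Matrix ι ι 𝕜} {c μ : ι → 𝕜}

theorem one_sub_mul (hC : IsHittingCost_s9 P c C) (hμ : μ ᵥ* P = μ) (hμ0 : ∀ i, μ i ≠ 0) :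
    (1 - P) * C = vecMulVec c 1 - (μ ⬝ᵥ c) • diagonal μ⁻¹ := by
  ext i j
  rcases eq_or_ne i j with rfl | hij
  · have hzero : μ ᵥ* ((1 - P) * C) = 0 := by
      rw [← vecMul_vecMul, vecMul_sub, vecMul_one, hμ, sub_self, zero_vecMul]
    have hbalance : μ i * (((1 - P) * C) i i - c i) = -(μ ⬝ᵥ c) := by
      calc μ i * (((1 - P) * C) i i - c i)
          = ∑ k, μ k * (((1 - P) * C) k i - c k) :=
            (Fintype.sum_eq_single (f := fun k ↦ μ k * (((1 - P) * C) k i - c k)) i fun k hk ↦ by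
              rw [hC.one_sub_mul_apply hk, sub_self, mul_zero]).symm
        _ = (μ ᵥ* ((1 - P) * C)) i - μ ⬝ᵥ c := by
            simp only [mul_sub, Finset.sum_sub_distrib, vecMul, dotProduct]
        _ = -(μ ⬝ᵥ c) := by rw [hzero, Pi.zero_apply, zero_sub]
    have := hμ0 i
    simp only [Matrix.sub_apply, vecMulVec_apply, Matrix.smul_apply, diagonal_apply_eq,
      Pi.inv_apply, Pi.one_apply, smul_eq_mul]
    field_simp
    linear_combination hbalance
  · simp [hC.one_sub_mul_apply hij, hij]

theorem one_sub_mulVec_col_sub_col (hC : IsHittingCost_s9 P c C) (hμ : μ ᵥ* P = μ)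
    (hμ0 : ∀ i, μ i ≠ 0) (i j : ι) :
    (1 - P) *ᵥ (C.col j - C.col i) =
      (μ ⬝ᵥ c) • (Pi.single i (μ i)⁻¹ - Pi.single j (μ j)⁻¹) := by
  rw [← mulVec_single_one, ← mulVec_single_one, ← mulVec_sub, mulVec_mulVec,
    hC.one_sub_mul hμ hμ0, sub_mulVec, vecMulVec_mulVec, smul_mulVec, mulVec_sub,
    diagonal_mulVec_single, diagonal_mulVec_single]
  simp [dotProduct_sub, ← smul_neg]

theorem one_sub_mulVec_mulVec (hC : IsHittingCost_s9 P c C) (hμ : μ ᵥ* P = μ)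
    (hμ0 : ∀ i, μ i ≠ 0) : (1 - P) *ᵥ (C *ᵥ μ) = (∑ i, μ i) • c - (μ ⬝ᵥ c) • 1 := by
  rw [mulVec_mulVec, hC.one_sub_mul hμ hμ0, sub_mulVec, vecMulVec_mulVec, smul_mulVec]
  ext i
  simp [mulVec_diagonal, hμ0 i, mul_comm (c i), one_dotProduct]

end Field

variable {𝕜 ι : Type*} [Field 𝕜] [LinearOrder 𝕜] [IsStrictOrderedRing 𝕜] [Fintype ι]
  [DecidableEq ι] {P C : Matrix ι ι 𝕜} {c μ : ι → 𝕜}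

theorem add_swap_pos_iff (hC : IsHittingCost_s9 P c C) (hP : P ∈ rowStochastic 𝕜 ι)
    (hμpos : ∀ i, 0 < μ i) (hμ : μ ᵥ* P = μ) {i j : ι} (hi : ∀ l, ∃ k : ℕ, 0 < (P ^ k) l i)
    (hj : ∀ l, ∃ k : ℕ, 0 < (P ^ k) l j) (hij : i ≠ j) :
    0 < C i j + C j i ↔ 0 < μ ⬝ᵥ c := by
  have hu (l : ι) := congrFun (hC.one_sub_mulVec_col_sub_col hμ (fun i ↦ (hμpos i).ne') i j) l
  have hsingle (m : ι) : 0 ≤ (Pi.single m (μ m)⁻¹ : ι → 𝕜) :=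
    Pi.single_nonneg.2 (inv_nonneg.2 (hμpos m).le)
  constructor
  · contrapose!
    intro hs
    have hmin := apply_le_of_one_sub_mulVec_nonneg_off hP hi (x := C.col j - C.col i)
      (fun l hl ↦ by
        rw [hu]
        simpa [hl] using mul_nonpos_of_nonpos_of_nonneg hs (hsingle j l)) j
    simp only [Pi.sub_apply, col_apply, hC.apply_self] at hmin
    linarith
  · intro hs
    have hmin := apply_lt_of_one_sub_mulVec_nonneg_off hP hj (x := C.col j - C.col i) (i := i)
      (fun l hl ↦ by
        rw [hu]
        simpa [hl] using mul_nonneg hs.le (hsingle i l))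
      (by
        rw [hu]
        simpa [hij] using mul_pos hs (inv_pos.2 (hμpos i)))
    simp only [Pi.sub_apply, col_apply, hC.apply_self] at hmin
    linarith

theorem exists_one_sub_mulVec_add_pos_iff [Nonempty ι] (hC : IsHittingCost_s9 P c C)
    (hμpos : ∀ i, 0 < μ i) (hμ : μ ᵥ* P = μ) :
    (∃ x, ∀ i, 0 < ((1 - P) *ᵥ x + c : ι → 𝕜) i) ↔ 0 < μ ⬝ᵥ c := by
  constructor
  · rintro ⟨x, hx⟩
    have hpair : μ ⬝ᵥ ((1 - P) *ᵥ x + c) = μ ⬝ᵥ c := by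
      rw [dotProduct_add, dotProduct_mulVec, vecMul_sub, vecMul_one, hμ, sub_self,
        zero_dotProduct, zero_add]
    rw [← hpair]
    exact Finset.sum_pos (fun i _ ↦ mul_pos (hμpos i) (hx i)) Finset.univ_nonempty
  · intro hs
    have hmass : 0 < ∑ i, μ i := Finset.sum_pos (fun i _ ↦ hμpos i) Finset.univ_nonempty
    refine ⟨-((∑ i, μ i)⁻¹ • C *ᵥ μ), fun i ↦ ?_⟩
    have hval : (1 - P) *ᵥ -((∑ i, μ i)⁻¹ • C *ᵥ μ) + c = ((∑ i, μ i)⁻¹ * (μ ⬝ᵥ c)) • 1 := by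
      rw [mulVec_neg, mulVec_smul, hC.one_sub_mulVec_mulVec hμ fun i ↦ (hμpos i).ne', smul_sub,
        inv_smul_smul₀ hmass.ne', smul_smul]
      abel
    rw [hval]
    simpa using mul_pos (inv_pos.2 hmass) hs

end IsHittingCost_s9

theorem setOf_forall_sum_sub_le_eq {R ι : Type*} [Ring R] [PartialOrder R] [IsOrderedRing R]
    [Fintype ι] [DecidableEq ι] (P : Matrix ι ι R) (c : ι → R) :
    {x : ι → R | ∀ i, (∑ j, P i j * x j) - c i ≤ x i} = {x | 0 ≤ (1 - P) *ᵥ x + c} := by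
  ext x
  change P *ᵥ x - c ≤ x ↔ 0 ≤ (1 - P) *ᵥ x + c
  rw [← sub_nonneg, sub_mulVec, one_mulVec, sub_sub_eq_add_sub, add_sub_right_comm]

theorem nonempty_interior_domain_tfae_general {𝕜 ι : Type*} [Field 𝕜] [LinearOrder 𝕜]
    [IsStrictOrderedRing 𝕜] [TopologicalSpace 𝕜] [OrderTopology 𝕜] [Fintype ι] [DecidableEq ι]
    [Nontrivial ι] {P C : Matrix ι ι 𝕜} {c μ : ι → 𝕜} (hP : P ∈ rowStochastic 𝕜 ι)
    (hirr : ∀ i j, ∃ k : ℕ, 0 < (P ^ k) i j) (hμpos : ∀ i, 0 < μ i) (hμ : μ ᵥ* P = μ)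
    (hC : IsHittingCost_s9 P c C) :
    [(interior {x | 0 ≤ (1 - P) *ᵥ x + c}).Nonempty,
      ∃ i j, i ≠ j ∧ 0 < C i j + C j i,
      0 < μ ⬝ᵥ c,
      ∀ i j, i ≠ j → 0 < C i j + C j i].TFAE := by
  have hrow (i : ι) : (1 - P) i ≠ 0 := by
    obtain ⟨j, hji⟩ := exists_ne i
    have hii := diag_lt_one_of_pow_apply_pos hP (hirr · j) hji.symm
    exact Function.ne_iff.2 ⟨i, by simpa [sub_eq_zero] using hii.ne'⟩
  have hswap {i j : ι} (hij : i ≠ j) : 0 < C i j + C j i ↔ 0 < μ ⬝ᵥ c :=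
    hC.add_swap_pos_iff hP hμpos hμ (hirr · i) (hirr · j) hij
  tfae_have 1 ↔ 3 := by
    rw [interior_setOf_nonneg_mulVec_add hrow]
    exact hC.exists_one_sub_mulVec_add_pos_iff hμpos hμ
  tfae_have 2 → 3 := fun ⟨_, _, hij, h⟩ ↦ (hswap hij).1 h
  tfae_have 3 → 4 := fun h _ _ hij ↦ (hswap hij).2 h
  tfae_have 4 → 2 := fun h ↦ (exists_pair_ne ι).imp fun i ⟨j, hij⟩ ↦ ⟨j, hij, h i j hij⟩
  tfae_finish

/-- Uncontrolled setting with an irreducible stochastic matrix `P`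
(`d = n + 2`), invariant probability `μ`, cost vector `c̄`, cost matrix `C` and
domain `D`.  The following are equivalent:
(i) `D` has nonempty interior;
(ii) `∃ i ≠ j, C i j + C j i > 0`;
(iii) `∑ i, μ i * c̄ i > 0`;
(iv) `∀ i ≠ j, C i j + C j i > 0`. -/
theorem nonempty_interior_domain_tfae
    (n : ℕ)
    (P : Matrix (Fin (n + 2)) (Fin (n + 2)) ℝ)
    (c : Fin (n + 2) → ℝ) (μ : Fin (n + 2) → ℝ)
    (hP0 : ∀ i j, 0 ≤ P i j)
    (hP1 : ∀ i, ∑ j, P i j = 1)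
    (hirr : ∀ i j, ∃ k : ℕ, 1 ≤ k ∧ 0 < (P ^ k) i j)
    (hμpos : ∀ i, 0 < μ i)
    (hμsum : ∑ i, μ i = 1)
    (hμinv : ∀ j, ∑ i, μ i * P i j = μ j)
    (C : Fin (n + 2) → Fin (n + 2) → ℝ)
    (hCdiag : ∀ j, C j j = 0)
    (hCoff : ∀ (j : Fin (n + 2)) (k : Fin (n + 1)),
      C (j.succAbove k) j =
        (((1 - P).submatrix j.succAbove j.succAbove)⁻¹ *ᵥ fun l => c (j.succAbove l)) k)
    (D : Set (Fin (n + 2) → ℝ))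
    (hD : D = {x | ∀ i, (∑ j, P i j * x j) - c i ≤ x i}) :
    [(interior D).Nonempty,
      ∃ i j : Fin (n + 2), i ≠ j ∧ 0 < C i j + C j i,
      0 < ∑ i, μ i * c i,
      ∀ i j : Fin (n + 2), i ≠ j → 0 < C i j + C j i].TFAE := by
  have hP : P ∈ rowStochastic ℝ _ := mem_rowStochastic_iff_sum.2 ⟨hP0, hP1⟩
  have hacc (i j) : ∃ k : ℕ, 0 < (P ^ k) i j := (hirr i j).imp fun _ ↦ And.right
  rw [hD.trans (setOf_forall_sum_sub_le_eq P c)]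
  exact nonempty_interior_domain_tfae_general hP hacc hμpos (funext hμinv)
    (.of_submatrix_inv hP hacc hCdiag hCoff)
end

section
/- In the uncontrolled setting with an irreducible stochastic matrix P, assume the domain D has nonempty interior. Define θ_{·,j} := C_{·,j} − C_{d,j}·(1,…,1) for all 1 ≤ j ≤ d. Then the d points (−θ_{·,j})_{1≤j≤d} are affinely independent, and the slice D_∘ = D ∩ {y ∈ ℝ^d : y_d = 0} is exactly the convex hull of the points (−θ_{·,j})_{1≤j≤d}. -/
open Matrix

/-!
An irreducible stochastic matrix `P` has a positive stationary vector `π`, and `Q = 1 - P` kills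
only the constants. Hence the slack `s = Qx + c` determines `x` within the hyperplane `y_d = 0`,
and it always satisfies `π ⬝ s = π ⬝ c`. At the point `-θ_{·,j}` all constraints but the `j`-th are
tight, so its slack is `(π ⬝ c / π_j) e_j`: the slack map carries the slice of `D` bijectively onto
the simplex `{s ≥ 0, π ⬝ s = π ⬝ c}` and the points `-θ_{·,j}` to its corners. Nonempty interior of
`D` means `π ⬝ c > 0`, so that these corners are distinct and span a genuine simplex.
-/

section Irreducible

theorem forall_of_isIrreducible {ι R : Type*} [Ring R] [LinearOrder R] {A : Matrix ι ι R}
    (hA : A.IsIrreducible) {p : ι → Prop} {i : ι} (hi : p i)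
    (hstep : ∀ k l, p k → 0 < A k l → p l) (j : ι) : p j := by
  let : Quiver ι := A.toQuiver
  obtain ⟨path, -⟩ := hA.connected i j
  induction path with
  | nil => exact hi
  | cons _ edge ih => exact hstep _ _ ih edge.down

variable {ι R : Type*} [Fintype ι] [CommRing R] [LinearOrder R] [IsStrictOrderedRing R]
  {P : Matrix ι ι R}

theorem pos_of_vecMul_eq_self (hirr : P.IsIrreducible) {v : ι → R} (hv0 : 0 ≤ v) (hne : v ≠ 0)
    (hv : v ᵥ* P = v) (j : ι) : 0 < v j := by
  obtain ⟨i, hi⟩ := Function.ne_iff.1 hne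
  have hi0 : 0 < v i := (hv0 i).lt_of_ne' hi
  refine forall_of_isIrreducible (p := fun k ↦ 0 < v k) hirr hi0 (fun k l hk hkl ↦ ?_) j
  calc
    0 < v k * P k l := mul_pos hk hkl
    _ ≤ ∑ m, v m * P m l := Finset.single_le_sum (f := fun m ↦ v m * P m l)
      (fun m _ ↦ mul_nonneg (hv0 m) (hirr.nonneg m l)) (Finset.mem_univ k)
    _ = v l := congrFun hv l

variable [DecidableEq ι]

theorem apply_eq_apply_of_mulVec_eq_self (hP : P ∈ rowStochastic R ι) (hirr : P.IsIrreducible)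
    {x : ι → R} (hx : P *ᵥ x = x) (i j : ι) : x i = x j := by
  have : Nonempty ι := ⟨i⟩
  obtain ⟨m, hm⟩ := Finite.exists_max x
  have hmax : ∀ l, x l = x m := by
    refine forall_of_isIrreducible hirr rfl fun k l hk hkl ↦ ?_
    have hsum : ∑ j, P k j * (x m - x j) = 0 := by
      have hxk : ∑ j, P k j * x j = x k := congrFun hx k
      simp only [mul_sub, Finset.sum_sub_distrib, ← Finset.sum_mul,
        sum_row_of_mem_rowStochastic hP, hxk, hk, one_mul, sub_self]
    have hzero := (Finset.sum_eq_zero_iff_of_nonneg fun j _ ↦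
      mul_nonneg (hirr.nonneg k j) (sub_nonneg.2 (hm j))).1 hsum l (Finset.mem_univ l)
    exact (sub_eq_zero.1 ((mul_eq_zero.1 hzero).resolve_left hkl.ne')).symm
  rw [hmax i, hmax j]

theorem abs_vecMul_eq_self (hP : P ∈ rowStochastic R ι) {v : ι → R} (hv : v ᵥ* P = v) :
    |v| ᵥ* P = |v| := by
  have hle : ∀ j, |v| j ≤ (|v| ᵥ* P) j := fun j ↦ calc
    |v| j = |∑ i, v i * P i j| := congrArg abs (congrFun hv j).symm
    _ ≤ ∑ i, |v i * P i j| := Finset.abs_sum_le_sum_abs _ _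
    _ = (|v| ᵥ* P) j := Finset.sum_congr rfl fun i _ ↦ by
      rw [abs_mul, abs_of_nonneg (nonneg_of_mem_rowStochastic hP), Pi.abs_apply]
  have hsum : ∑ j, |v| j = ∑ j, (|v| ᵥ* P) j := by
    simpa only [dotProduct_one, one_vecMul_of_mem_rowStochastic hP]
      using dotProduct_mulVec |v| P 1
  have heq := (Finset.sum_eq_sum_iff_of_le fun j _ ↦ hle j).1 hsum
  exact funext fun j ↦ (heq j (Finset.mem_univ j)).symm

theorem exists_pos_vecMul_eq_self [Nonempty ι] (hP : P ∈ rowStochastic R ι)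
    (hirr : P.IsIrreducible) : ∃ π : ι → R, (∀ i, 0 < π i) ∧ π ᵥ* P = π := by
  have hdet : (1 - P).det = 0 := exists_mulVec_eq_zero_iff.1
    ⟨1, one_ne_zero, by rw [sub_mulVec, one_mulVec, one_vecMul_of_mem_rowStochastic hP, sub_self]⟩
  obtain ⟨v, hne, hv⟩ := exists_vecMul_eq_zero_iff.2 hdet
  rw [vecMul_sub, vecMul_one, sub_eq_zero] at hv
  have hne' : |v| ≠ 0 := fun h ↦ hne (funext fun i ↦ abs_eq_zero.1 (congrFun h i))
  have habs := abs_vecMul_eq_self hP hv.symm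
  exact ⟨|v|, pos_of_vecMul_eq_self hirr (abs_nonneg v) hne' habs, habs⟩

end Irreducible

section WeightedSimplex

variable {ι K : Type*} [Fintype ι] [Field K] {w s : ι → K}

theorem eq_single_dotProduct_div [DecidableEq ι] {j : ι} (hw : w j ≠ 0)
    (hs : ∀ i, i ≠ j → s i = 0) : s = Pi.single j (w ⬝ᵥ s / w j) := by
  have hsingle : s = Pi.single j (s j) := by
    ext i
    obtain rfl | hij := eq_or_ne i j
    · rw [Pi.single_eq_same]
    · rw [hs i hij, Pi.single_eq_of_ne hij]
  have hdot : w ⬝ᵥ s = w j * s j := by rw [hsingle, dotProduct_single, Pi.single_eq_same]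
  rw [hdot, mul_div_cancel_left₀ _ hw]
  exact hsingle

variable [LinearOrder K] [IsStrictOrderedRing K]

theorem eq_zero_of_dotProduct_eq_zero (hw : ∀ i, 0 < w i) (hs : 0 ≤ s) (h : w ⬝ᵥ s = 0) :
    s = 0 := by
  have hzero := (Finset.sum_eq_zero_iff_of_nonneg fun i _ ↦ mul_nonneg (hw i).le (hs i)).1 h
  exact funext fun i ↦ (mul_eq_zero.1 (hzero i (Finset.mem_univ i))).resolve_left (hw i).ne'

theorem mem_convexHull_range_single_dotProduct_div [DecidableEq ι] [Nonempty ι] (hw : ∀ i, 0 < w i)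
    (hs : 0 ≤ s) : s ∈ convexHull K (Set.range fun j ↦ Pi.single j (w ⬝ᵥ s / w j)) := by
  obtain h | h := eq_or_ne (w ⬝ᵥ s) 0
  · simp [eq_zero_of_dotProduct_eq_zero hw hs h]
  have hpos : 0 < w ⬝ᵥ s :=
    (Finset.sum_nonneg fun i _ ↦ mul_nonneg (hw i).le (hs i)).lt_of_ne' h
  have hsum : ∑ j, w j * s j / (w ⬝ᵥ s) = 1 := by
    rw [← Finset.sum_div]
    exact div_self h
  have hcomb : ∑ j, (w j * s j / (w ⬝ᵥ s)) • Pi.single j (w ⬝ᵥ s / w j) = s := by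
    simp_rw [← Pi.single_smul, Finset.univ_sum_single, smul_eq_mul]
    ext j
    have := (hw j).ne'
    field_simp
  have hmem := (convex_convexHull K (Set.range fun j ↦ Pi.single j (w ⬝ᵥ s / w j))).sum_mem
    (fun j _ ↦ div_nonneg (mul_nonneg (hw j).le (hs j)) hpos.le) hsum
    fun j _ ↦ subset_convexHull K _ ⟨j, rfl⟩
  rwa [hcomb] at hmem

end WeightedSimplex

section Slack

variable {ι K : Type*} [Fintype ι] [DecidableEq ι] [Field K]
  {P : Matrix ι ι K} {c π : ι → K}

/-- The slack `Qx + c` of the constraints defining the domain `D`, with `Q = 1 - P`, as an affine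
map of `x`. -/
def slackMap (P : Matrix ι ι K) (c : ι → K) : (ι → K) →ᵃ[K] (ι → K) :=
  (1 - P).mulVecLin.toAffineMap + AffineMap.const K _ c

theorem slackMap_apply (x : ι → K) : slackMap P c x = (1 - P) *ᵥ x + c := rfl

theorem slackMap_const_sub (hP : P *ᵥ 1 = 1) (c : ι → K) (a : K) (x : ι → K) :
    slackMap P c (fun i ↦ a - x i) = c - (1 - P) *ᵥ x := by
  have hconst : (1 - P) *ᵥ (a • (1 : ι → K)) = 0 := by
    rw [mulVec_smul, sub_mulVec, one_mulVec, hP, sub_self, smul_zero]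
  have hsub : (fun i ↦ a - x i) = a • 1 - x := by ext i; simp
  rw [slackMap_apply, hsub, mulVec_sub, hconst, zero_sub, neg_add_eq_sub]

theorem dotProduct_slackMap (hπ : π ᵥ* P = π) (x : ι → K) : π ⬝ᵥ slackMap P c x = π ⬝ᵥ c := by
  rw [slackMap_apply, dotProduct_add, dotProduct_mulVec, vecMul_sub, vecMul_one, hπ, sub_self,
    zero_dotProduct, zero_add]

theorem slackMap_eq_single {j : ι} (hπj : π j ≠ 0) (hπ : π ᵥ* P = π) {x : ι → K}
    (hx : ∀ i, i ≠ j → slackMap P c x i = 0) :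
    slackMap P c x = Pi.single j (π ⬝ᵥ c / π j) :=
  dotProduct_slackMap (c := c) hπ x ▸ eq_single_dotProduct_div hπj hx

theorem affineIndependent_of_slackMap_ne_zero {v : ι → ι → K}
    (hv : ∀ i j, i ≠ j → slackMap P c (v j) i = 0) (hne : ∀ j, slackMap P c (v j) ≠ 0) :
    AffineIndependent K v := by
  have hsingle : slackMap P c ∘ v = fun j ↦ Pi.single j (slackMap P c (v j) j) := by
    ext j i
    obtain rfl | hij := eq_or_ne i j
    · simp
    · simp [hij, hv i j hij]
  refine .of_comp (slackMap P c) (hsingle ▸ LinearIndependent.affineIndependent K ?_)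
  refine Pi.linearIndependent_single_of_ne_zero fun j hj ↦ hne j (funext fun i ↦ ?_)
  obtain rfl | hij := eq_or_ne i j
  exacts [hj, hv i j hij]

variable [LinearOrder K] [IsStrictOrderedRing K]

/-- The domain `D` of all `x` with `Qx + c ≥ 0`. -/
def slackDomain (P : Matrix ι ι K) (c : ι → K) : Set (ι → K) :=
  slackMap P c ⁻¹' Set.Ici 0

theorem mem_slackDomain_iff {x : ι → K} :
    x ∈ slackDomain P c ↔ ∀ i, (∑ j, P i j * x j) - c i ≤ x i := by
  refine forall_congr' fun i ↦ ?_
  rw [slackMap_apply, sub_mulVec, one_mulVec, Pi.zero_apply, Pi.add_apply, Pi.sub_apply,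
    sub_add, sub_nonneg]
  rfl

theorem sub_eq_sub_of_slackMap_eq (hP : P ∈ rowStochastic K ι) (hirr : P.IsIrreducible)
    {x y : ι → K} (h : slackMap P c x = slackMap P c y) (i j : ι) : x i - y i = x j - y j := by
  have hker : (1 - P) *ᵥ (x - y) = 0 := by
    rw [mulVec_sub, sub_eq_zero]
    exact add_right_cancel h
  rw [sub_mulVec, one_mulVec, sub_eq_zero] at hker
  exact apply_eq_apply_of_mulVec_eq_self hP hirr hker.symm i j

theorem injOn_slackMap (hP : P ∈ rowStochastic K ι) (hirr : P.IsIrreducible) (r : ι) :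
    Set.InjOn (slackMap P c) {y | y r = 0} := fun x hx y hy h ↦ funext fun i ↦ by
  have hi := sub_eq_sub_of_slackMap_eq hP hirr h i r
  rw [show x r = 0 from hx, show y r = 0 from hy, sub_self] at hi
  exact sub_eq_zero.1 hi

theorem dotProduct_nonneg_of_nonempty_slackDomain (hπ0 : ∀ i, 0 < π i) (hπ : π ᵥ* P = π)
    (h : (slackDomain P c).Nonempty) : 0 ≤ π ⬝ᵥ c := by
  obtain ⟨x, hx⟩ := h
  rw [← dotProduct_slackMap hπ x]
  exact Finset.sum_nonneg fun i _ ↦ mul_nonneg (hπ0 i).le (hx i)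

theorem convex_slackDomain_inter (P : Matrix ι ι K) (c : ι → K) (r : ι) :
    Convex K (slackDomain P c ∩ {y | y r = 0}) :=
  ((convex_Ici 0).affine_preimage (slackMap P c)).inter
    ((convex_singleton 0).is_linear_preimage (LinearMap.proj r : (ι → K) →ₗ[K] K).isLinear)

theorem slackDomain_inter_eq_convexHull (hP : P ∈ rowStochastic K ι) (hirr : P.IsIrreducible)
    {r : ι} {v : ι → ι → K} (hv : ∀ i j, i ≠ j → slackMap P c (v j) i = 0) (hvr : ∀ j, v j r = 0)
    (hne : (slackDomain P c).Nonempty) :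
    slackDomain P c ∩ {y | y r = 0} = convexHull K (Set.range v) := by
  have : Nonempty ι := ⟨r⟩
  obtain ⟨π, hπ0, hπ⟩ := exists_pos_vecMul_eq_self hP hirr
  have hvertex j : slackMap P c (v j) = Pi.single j (π ⬝ᵥ c / π j) :=
    slackMap_eq_single (hπ0 j).ne' hπ (hv · j)
  have hhull : convexHull K (Set.range v) ⊆ slackDomain P c ∩ {y | y r = 0} := by
    refine convexHull_min ?_ (convex_slackDomain_inter P c r)
    rintro _ ⟨j, rfl⟩
    refine ⟨?_, hvr j⟩
    rw [slackDomain, Set.mem_preimage, Set.mem_Ici, hvertex, Pi.single_nonneg]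
    exact div_nonneg (dotProduct_nonneg_of_nonempty_slackDomain hπ0 hπ hne) (hπ0 j).le
  refine Set.Subset.antisymm (fun y hy ↦ ?_) hhull
  have hmem : slackMap P c y ∈ slackMap P c '' convexHull K (Set.range v) := by
    rw [AffineMap.image_convexHull, ← Set.range_comp,
      show slackMap P c ∘ v = _ from funext hvertex, ← dotProduct_slackMap hπ y]
    exact mem_convexHull_range_single_dotProduct_div hπ0 hy.1
  obtain ⟨x, hx, hxy⟩ := hmem
  exact injOn_slackMap hP hirr r (hhull hx).2 hy.2 hxy ▸ hx

end Slack

section Interior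

theorem exists_pos_add_smul_mem_of_mem_interior {E : Type*} [AddCommGroup E] [Module ℝ E]
    [TopologicalSpace E] [ContinuousAdd E] [ContinuousSMul ℝ E] {s : Set E} {x : E}
    (hx : x ∈ interior s) (v : E) : ∃ t : ℝ, 0 < t ∧ x + t • v ∈ s := by
  have hcont : Filter.Tendsto (fun t : ℝ ↦ x + t • v) (nhds 0) (nhds x) := by
    have : Continuous fun t : ℝ ↦ x + t • v := by fun_prop
    simpa using this.tendsto 0
  have hnear := (hcont.eventually_mem (mem_interior_iff_mem_nhds.1 hx)).filter_mono
    (nhdsWithin_le_nhds (s := Set.Ioi 0))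
  have hpos : ∀ᶠ t : ℝ in nhdsWithin 0 (Set.Ioi 0), 0 < t := self_mem_nhdsWithin
  exact (hpos.and hnear).exists

variable {ι : Type*} [Fintype ι] [DecidableEq ι] {P : Matrix ι ι ℝ} {c : ι → ℝ}

theorem slackMap_ne_zero_of_nonempty_interior [Nontrivial ι] (hP : P ∈ rowStochastic ℝ ι)
    (hirr : P.IsIrreducible) (hint : (interior (slackDomain P c)).Nonempty) (z : ι → ℝ) :
    slackMap P c z ≠ 0 := by
  intro hz
  obtain ⟨π, hπ0, hπ⟩ := exists_pos_vecMul_eq_self hP hirr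
  have htight : ∀ y ∈ slackDomain P c, slackMap P c y = 0 := fun y hy ↦
    eq_zero_of_dotProduct_eq_zero hπ0 hy <| by
      rw [dotProduct_slackMap hπ, ← dotProduct_slackMap hπ z, hz, dotProduct_zero]
  obtain ⟨x, hx⟩ := hint
  obtain ⟨i, j, hij⟩ := exists_pair_ne ι
  obtain ⟨t, ht, hxt⟩ := exists_pos_add_smul_mem_of_mem_interior hx (Pi.single i 1)
  have hconst := sub_eq_sub_of_slackMap_eq hP hirr
    ((htight _ hxt).trans (htight x (interior_subset hx)).symm) i j
  simp [hij.symm, ht.ne'] at hconst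

end Interior

section CostMatrix

theorem submatrix_mulVec_comp {l m n o R : Type*} [Fintype n] [Fintype o]
    [NonUnitalNonAssocSemiring R] (A : Matrix m n R) (g : l → m) {f : o → n}
    (hf : Function.Injective f) {x : n → R} (hx : ∀ i ∉ Set.range f, x i = 0) :
    A.submatrix g f *ᵥ (x ∘ f) = (A *ᵥ x) ∘ g :=
  funext fun _ ↦ Fintype.sum_of_injective f hf _ _
    (fun i hi ↦ by rw [hx i hi, mul_zero]) fun _ ↦ rfl

variable {ι κ K : Type*} [Fintype ι] [DecidableEq ι] [Fintype κ] [DecidableEq κ] [Field K]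
  [LinearOrder K] [IsStrictOrderedRing K] {P : Matrix ι ι K} {f : κ → ι} {j : ι}

theorem isUnit_det_submatrix_one_sub (hP : P ∈ rowStochastic K ι) (hirr : P.IsIrreducible)
    (hf : Function.Injective f) (hrange : Set.range f = {j}ᶜ) :
    IsUnit ((1 - P).submatrix f f).det := by
  have : Nonempty ι := ⟨j⟩
  obtain ⟨π, hπ0, hπ⟩ := exists_pos_vecMul_eq_self hP hirr
  refine isUnit_iff_ne_zero.2 fun hdet ↦ ?_
  obtain ⟨u, hne, hu⟩ := exists_mulVec_eq_zero_iff.2 hdet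
  set x : ι → K := Function.extend f u 0
  have hxf : x ∘ f = u := Function.extend_comp hf u 0
  have hx0 : ∀ i ∉ Set.range f, x i = 0 := fun i hi ↦ Function.extend_apply' u (0 : ι → K) i hi
  have hoff : ∀ i, i ≠ j → slackMap P 0 x i = 0 := fun i hij ↦ by
    obtain ⟨k, rfl⟩ : i ∈ Set.range f := hrange ▸ hij
    rw [slackMap_apply, add_zero]
    exact congrFun ((submatrix_mulVec_comp (1 - P) f hf hx0).symm.trans (hxf ▸ hu)) k
  have hslack : slackMap P 0 x = slackMap P 0 0 := by
    rw [slackMap_eq_single (hπ0 j).ne' hπ hoff, slackMap_apply, mulVec_zero, add_zero,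
      dotProduct_zero, zero_div, Pi.single_zero]
  have hx : x = 0 := injOn_slackMap hP hirr j (hx0 j (by simp [hrange])) rfl hslack
  exact hne (by rw [← hxf, hx, Pi.zero_comp])

theorem mulVec_eq_of_comp_eq_inv_submatrix_mulVec (hP : P ∈ rowStochastic K ι)
    (hirr : P.IsIrreducible) (hf : Function.Injective f) (hrange : Set.range f = {j}ᶜ)
    {b x : ι → K} (hxj : x j = 0)
    (hx : x ∘ f = ((1 - P).submatrix f f)⁻¹ *ᵥ (b ∘ f)) {i : ι} (hij : i ≠ j) :
    ((1 - P) *ᵥ x) i = b i := by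
  obtain ⟨k, rfl⟩ : i ∈ Set.range f := hrange ▸ hij
  have hx0 : ∀ i ∉ Set.range f, x i = 0 := by simpa [hrange] using hxj
  have hsub := submatrix_mulVec_comp (1 - P) f hf hx0
  rw [hx, mulVec_mulVec, mul_nonsing_inv _ (isUnit_det_submatrix_one_sub hP hirr hf hrange),
    one_mulVec] at hsub
  exact (congrFun hsub k).symm

end CostMatrix

theorem slice_is_convex_hull_of_extreme_points_general {ι K : Type*} [Fintype ι] [DecidableEq ι]
    [Field K] [LinearOrder K] [IsStrictOrderedRing K] {P : Matrix ι ι K} {c : ι → K}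
    (hP : P ∈ rowStochastic K ι) (hirr : P.IsIrreducible) {C : ι → ι → K}
    (hC : ∀ i j, i ≠ j → ((1 - P) *ᵥ fun k ↦ C k j) i = c i)
    (hne : (slackDomain P c).Nonempty) (r : ι) :
    ((∀ x, slackMap P c x ≠ 0) → AffineIndependent K fun j i ↦ C r j - C i j) ∧
      slackDomain P c ∩ {y | y r = 0} = convexHull K (Set.range fun j i ↦ C r j - C i j) := by
  have hv : ∀ i j, i ≠ j → slackMap P c (fun i ↦ C r j - C i j) i = 0 := fun i j hij ↦ by
    rw [slackMap_const_sub (one_vecMul_of_mem_rowStochastic hP), Pi.sub_apply, hC i j hij, sub_self]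
  exact ⟨fun h ↦ affineIndependent_of_slackMap_ne_zero hv fun j ↦ h _,
    slackDomain_inter_eq_convexHull hP hirr hv (fun j ↦ sub_self _) hne⟩

/-- Uncontrolled setting with an irreducible stochastic matrix `P`
(`d = n + 2`), cost vector `c̄`, cost matrix `C` and domain `D` with nonempty interior.
For `θ_{·,j} := C_{·,j} − C_{d,j}·(1,…,1)`, the `d` points `(−θ_{·,j})_j`, i.e.
`(−θ)_{i,j} = C_{d,j} − C_{i,j}`, are affinely independent, and the slice
`D_∘ = D ∩ {y_d = 0}` is exactly their convex hull. -/
theorem slice_is_convex_hull_of_extreme_points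
    (n : ℕ)
    (P : Matrix (Fin (n + 2)) (Fin (n + 2)) ℝ)
    (c : Fin (n + 2) → ℝ)
    (hP0 : ∀ i j, 0 ≤ P i j)
    (hP1 : ∀ i, ∑ j, P i j = 1)
    (hirr : ∀ i j, ∃ k : ℕ, 1 ≤ k ∧ 0 < (P ^ k) i j)
    (C : Fin (n + 2) → Fin (n + 2) → ℝ)
    (hCdiag : ∀ j, C j j = 0)
    (hCoff : ∀ (j : Fin (n + 2)) (k : Fin (n + 1)),
      C (j.succAbove k) j =
        (((1 - P).submatrix j.succAbove j.succAbove)⁻¹ *ᵥ fun l => c (j.succAbove l)) k)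
    (D : Set (Fin (n + 2) → ℝ))
    (hD : D = {x | ∀ i, (∑ j, P i j * x j) - c i ≤ x i})
    (hint : (interior D).Nonempty) :
    AffineIndependent ℝ
      (fun j : Fin (n + 2) => fun i : Fin (n + 2) =>
        C (Fin.last (n + 1)) j - C i j) ∧
    D ∩ {y | y (Fin.last (n + 1)) = 0} =
      convexHull ℝ (Set.range
        (fun j : Fin (n + 2) => fun i : Fin (n + 2) =>
          C (Fin.last (n + 1)) j - C i j)) := by
  have hP : P ∈ rowStochastic ℝ _ := mem_rowStochastic_iff_sum.2 ⟨hP0, hP1⟩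
  have hPirr : P.IsIrreducible := (isIrreducible_iff_exists_pow_pos hP0).2 hirr
  have hC : ∀ i j, i ≠ j → ((1 - P) *ᵥ fun k ↦ C k j) i = c i := fun _ j hij ↦
    mulVec_eq_of_comp_eq_inv_submatrix_mulVec hP hPirr Fin.succAbove_right_injective
      (Fin.range_succAbove j) (b := c) (x := fun k ↦ C k j) (hCdiag j) (funext (hCoff j)) hij
  obtain rfl : D = slackDomain P c := hD.trans (Set.ext fun _ ↦ mem_slackDomain_iff.symm)
  obtain ⟨hindep, hslice⟩ := slice_is_convex_hull_of_extreme_points_general hP hPirr hC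
    (hint.mono interior_subset) (Fin.last (n + 1))
  exact ⟨hindep (slackMap_ne_zero_of_nonempty_interior hP hPirr hint), hslice⟩
end

section
/- Let P be a d×d irreducible stochastic matrix with invariant probability μ and Q = I_d − P. For all pairwise distinct indices 1 ≤ i, j, k ≤ d, writing adj(M) for the adjugate matrix of M, one has: μ_i · adj(Q^{(j,j)})_{i^{(j)}, k^{(j)}} + μ_j · adj(Q^{(i,i)})_{j^{(i)}, k^{(i)}} = μ_k · adj(Q^{(i,i)})_{j^{(i)}, j^{(i)}}, and moreover adj(Q^{(j,j)})_{i^{(j)}, i^{(j)}} = adj(Q^{(i,i)})_{j^{(i)}, j^{(i)}}. -/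
open Matrix

/-! A vector `μ` with `μ ᵥ* Q = 0` turns row operations on `Q` into relations between determinants.
Let `W` be `Q` with rows `i` and `j` replaced by `u` and `v`. Then
`μ ᵥ* W = μ i • (u - Q i) + μ j • (v - Q j)`, while putting `μ ᵥ* W` into row `k` of `W` multiplies
the determinant by `μ k`. Expanding along that row, the terms with `u` and `v` have a repeated row,
and those with `Q i` and `Q j` are, after a transposition, determinants of `Q` with two other rows
replaced. For the basis vectors `u = e_i`, `v = e_j` all these determinants are entries of adjugates
of principal submatrices of `Q`. -/

section VecMul

variable {m R : Type*} [Fintype m] [DecidableEq m]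

theorem vecMul_updateRow {n : Type*} [NonUnitalNonAssocRing R] (w : m → R) (M : Matrix m n R)
    (i : m) (u : n → R) :
    w ᵥ* M.updateRow i u = w ᵥ* M + w i • (u - M i) := by
  rw [← sub_eq_iff_eq_add', ← vecMul_sub, vecMul_eq_sum, Finset.sum_eq_single i]
  · exact congrArg (w i • (· - M i)) updateRow_self
  · intro l _ hl
    ext y
    simp [hl]
  · simp

theorem vecMul_one_sub_eq_zero_iff [NonAssocRing R] {P : Matrix m m R} {w : m → R} :
    w ᵥ* (1 - P) = 0 ↔ w ᵥ* P = w := by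
  rw [vecMul_sub, vecMul_one, sub_eq_zero, eq_comm]

end VecMul

section RowReplacement

variable {m R : Type*} [Fintype m] [DecidableEq m] [CommRing R]

theorem det_updateRow_vecMul (M : Matrix m m R) (k : m) (w : m → R) :
    (M.updateRow k (w ᵥ* M)).det = w k * M.det := by
  rw [vecMul_eq_sum, det_updateRow_sum, smul_eq_mul]

theorem det_updateRow_sub (M : Matrix m m R) (k : m) (u v : m → R) :
    (M.updateRow k (u - v)).det = (M.updateRow k u).det - (M.updateRow k v).det :=
  detRowAlternating.map_update_sub M k u v

theorem det_updateRow_updateRow_apply (M : Matrix m m R) {i k : m} (hik : i ≠ k) (u : m → R) :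
    ((M.updateRow i u).updateRow k (M i)).det = -(M.updateRow k u).det := by
  have rows_swapped : (M.updateRow i u).updateRow k (M i) =
      (M.updateRow k u).submatrix (Equiv.swap i k) id := by
    ext x y
    simp only [submatrix_apply, updateRow_apply, Equiv.swap_apply_def, id]
    grind
  rw [rows_swapped, det_permute, Equiv.Perm.sign_swap hik, Units.val_neg, Units.val_one,
    Int.cast_neg, Int.cast_one, neg_one_mul]

theorem det_updateRow_updateRow_of_vecMul_eq_zero {M : Matrix m m R} {w : m → R}
    (hw : w ᵥ* M = 0) {i j k : m} (hij : i ≠ j) (hik : i ≠ k) (hjk : j ≠ k) (u v : m → R) :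
    w i * ((M.updateRow k u).updateRow j v).det + w j * ((M.updateRow k v).updateRow i u).det =
      w k * ((M.updateRow j v).updateRow i u).det := by
  set W := (M.updateRow j v).updateRow i u with hW
  have hW' : W = (M.updateRow i u).updateRow j v := updateRow_comm M hij.symm v u
  have vecMul_W : w ᵥ* W = w j • (v - M j) + w i • (u - M i) := by
    rw [hW, vecMul_updateRow, vecMul_updateRow, hw, zero_add, updateRow_ne hij]
  have det_u : (W.updateRow k u).det = 0 := by
    simpa only [hW, updateRow_self] using det_updateRow_eq_zero (M := W) hik
  have det_v : (W.updateRow k v).det = 0 := by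
    simpa only [hW', updateRow_self] using det_updateRow_eq_zero (M := W) hjk
  have det_row_i : (W.updateRow k (M i)).det = -((M.updateRow k u).updateRow j v).det := by
    simpa only [updateRow_ne hij, updateRow_comm M hjk] using
      det_updateRow_updateRow_apply (M.updateRow j v) hik u
  have det_row_j : (W.updateRow k (M j)).det = -((M.updateRow k v).updateRow i u).det := by
    simpa only [hW', updateRow_ne hij.symm, updateRow_comm M hik] using
      det_updateRow_updateRow_apply (M.updateRow i u) hjk v
  calc _ = (W.updateRow k (w ᵥ* W)).det := by
        rw [vecMul_W, det_updateRow_add, det_updateRow_smul, det_updateRow_smul,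
          det_updateRow_sub, det_updateRow_sub, det_u, det_v, det_row_i, det_row_j]
        ring
    _ = w k * W.det := det_updateRow_vecMul W k w

end RowReplacement

section PrincipalSubmatrix

variable {R : Type*} [CommRing R] {n : ℕ}

theorem det_submatrix_succAbove (M : Matrix (Fin (n + 1)) (Fin (n + 1)) R) (j : Fin (n + 1)) :
    (M.submatrix j.succAbove j.succAbove).det = (M.updateRow j (Pi.single j 1)).det := by
  rw [← adjugate_apply, adjugate_fin_succ_eq_det_submatrix, Even.neg_one_pow ⟨_, rfl⟩, one_mul]

theorem adjugate_submatrix_succAbove (M : Matrix (Fin (n + 1)) (Fin (n + 1)) R)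
    (j : Fin (n + 1)) (a b : Fin n) :
    (M.submatrix j.succAbove j.succAbove).adjugate a b =
      ((M.updateRow (j.succAbove b) (Pi.single (j.succAbove a) 1)).updateRow j
        (Pi.single j 1)).det := by
  have updateRow_submatrix :
      (M.submatrix j.succAbove j.succAbove).updateRow b (Pi.single a 1) =
        (M.updateRow (j.succAbove b) (Pi.single (j.succAbove a) 1)).submatrix
          j.succAbove j.succAbove := by
    ext x y
    simp [updateRow_apply, Pi.single_apply]
  rw [adjugate_apply, updateRow_submatrix, det_submatrix_succAbove]

theorem adjugate_invariant_measure_identity_general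
    {Q : Matrix (Fin (n + 1)) (Fin (n + 1)) R} {μ : Fin (n + 1) → R} (hμ : μ ᵥ* Q = 0)
    {i j k : Fin (n + 1)} {a b a' b' : Fin n}
    (ha : j.succAbove a = i) (hb : j.succAbove b = k)
    (ha' : i.succAbove a' = j) (hb' : i.succAbove b' = k) :
    μ i * (Q.submatrix j.succAbove j.succAbove).adjugate a b +
      μ j * (Q.submatrix i.succAbove i.succAbove).adjugate a' b' =
      μ k * (Q.submatrix i.succAbove i.succAbove).adjugate a' a' ∧
    (Q.submatrix j.succAbove j.succAbove).adjugate a a =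
      (Q.submatrix i.succAbove i.succAbove).adjugate a' a' := by
  have hij : i ≠ j := ha ▸ j.succAbove_ne a
  have hik : i ≠ k := hb' ▸ i.ne_succAbove b'
  have hjk : j ≠ k := hb ▸ j.ne_succAbove b
  simp only [adjugate_submatrix_succAbove, ha, hb, ha', hb']
  exact ⟨det_updateRow_updateRow_of_vecMul_eq_zero hμ hij hik hjk _ _,
    congrArg det (updateRow_comm Q hij _ _)⟩

end PrincipalSubmatrix

/-- Let `P` be a `d × d` irreducible stochastic matrix (`d = n + 2`)
with invariant probability `μ` and `Q = I − P`.  For pairwise distinct indices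
`i, j, k` (with `i = j.succAbove a`, `k = j.succAbove b`, `j = i.succAbove a'`,
`k = i.succAbove b'`, so that `a = i^{(j)}`, `b = k^{(j)}`, `a' = j^{(i)}`,
`b' = k^{(i)}`), writing `adjugate` for the adjugate matrix:
`μ i * adj(Q^{(j,j)})_{i^{(j)},k^{(j)}} + μ j * adj(Q^{(i,i)})_{j^{(i)},k^{(i)}}
  = μ k * adj(Q^{(i,i)})_{j^{(i)},j^{(i)}}`, and moreover
`adj(Q^{(j,j)})_{i^{(j)},i^{(j)}} = adj(Q^{(i,i)})_{j^{(i)},j^{(i)}}`. -/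
theorem adjugate_invariant_measure_identity
    (n : ℕ)
    (P : Matrix (Fin (n + 2)) (Fin (n + 2)) ℝ)
    (μ : Fin (n + 2) → ℝ)
    (hP0 : ∀ i j, 0 ≤ P i j)
    (hP1 : ∀ i, ∑ j, P i j = 1)
    (hirr : ∀ i j, ∃ k : ℕ, 1 ≤ k ∧ 0 < (P ^ k) i j)
    (hμpos : ∀ i, 0 < μ i)
    (hμsum : ∑ i, μ i = 1)
    (hμinv : ∀ j, ∑ i, μ i * P i j = μ j)
    (i j k : Fin (n + 2))
    (hij : i ≠ j) (hik : i ≠ k) (hjk : j ≠ k)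
    (a b a' b' : Fin (n + 1))
    (ha : j.succAbove a = i) (hb : j.succAbove b = k)
    (ha' : i.succAbove a' = j) (hb' : i.succAbove b' = k) :
    μ i * ((1 - P).submatrix j.succAbove j.succAbove).adjugate a b +
      μ j * ((1 - P).submatrix i.succAbove i.succAbove).adjugate a' b' =
      μ k * ((1 - P).submatrix i.succAbove i.succAbove).adjugate a' a' ∧
    ((1 - P).submatrix j.succAbove j.succAbove).adjugate a a =
      ((1 - P).submatrix i.succAbove i.succAbove).adjugate a' a' :=
  adjugate_invariant_measure_identity_general
    (vecMul_one_sub_eq_zero_iff.2 (funext hμinv)) ha hb ha' hb'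
end

section
/- In the uncontrolled setting with an irreducible stochastic matrix P, assume D has nonempty interior. Let y ∈ D_∘ and write y = ∑_{i=1}^d λ_i y^i with λ_i ≥ 0, ∑_i λ_i = 1 (the unique barycentric representation in the extreme points y^i := (C_{d,i} − C_{ℓ,i})_{1≤ℓ≤d} of D_∘), and set E_y := {1 ≤ i ≤ d : λ_i > 0}. Let n_j := (−Q_{j,k})_{1≤k≤d} ∈ ℝ^d denote the negative of the j-th row of Q. Then the outward normal cone of D at y is C(y) = { ∑_{j ∉ E_y} α_j n_j : α_j ≥ 0 } (which is {0} when E_y = {1,…,d}). -/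
/-!
Let `Q = 1 - P` and let `μ > 0` be an invariant vector of `P`, so that `μ Q = 0`. The slack
`s z = Q z + c` satisfies `μ ⬝ s z = μ ⬝ c` for every `z`, hence it maps `D` into a simplex, and it
sends the `k`-th extreme point of `D_∘` to the `k`-th vertex `(μ ⬝ c / μ k) e_k` of that simplex.
Therefore `λ k = μ k * s y k / (μ ⬝ c)`, and `E_y` consists of the constraints with positive slack
at `y`.

A vector normal to `D` at `y` vanishes on `ker Q`, so it is `-(β Q)` for some `β`. Adding a multiple
of `μ` to `β` does not change `β Q`, and makes `β` orthogonal to `s y`. Testing normality at the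
extreme points then gives `β ≥ 0`, and complementary slackness does the rest.
-/

open Matrix

lemma vecMul_pow_of_vecMul_eq {R ι : Type*} [Semiring R] [Fintype ι] [DecidableEq ι]
    {P : Matrix ι ι R} {w : ι → R} (hw : w ᵥ* P = w) (k : ℕ) : w ᵥ* P ^ k = w := by
  induction k with
  | zero => simp
  | succ k ih => rw [pow_succ, ← vecMul_vecMul, ih, hw]

section IrreducibleStochastic

variable {R ι : Type*} [CommRing R] [LinearOrder R] [IsStrictOrderedRing R] [Fintype ι]

lemma abs_mulVec_le_s13 {m : Type*} {A : Matrix m ι R} (hA : ∀ i j, 0 ≤ A i j) (x : ι → R) :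
    |A *ᵥ x| ≤ A *ᵥ |x| := fun i => calc
    |∑ j, A i j * x j| ≤ ∑ j, |A i j * x j| := Finset.abs_sum_le_sum_abs _ _
    _ = ∑ j, A i j * |x j| := by simp only [abs_mul, abs_of_nonneg (hA i _)]

variable {P : Matrix ι ι R}

lemma pos_of_vecMul_eq (hirr : P.IsIrreducible) {w : ι → R} (hw0 : 0 ≤ w) (hne : w ≠ 0)
    (hw : w ᵥ* P = w) (j : ι) : 0 < w j := by
  classical
  obtain ⟨i, hi⟩ := Function.ne_iff.1 hne
  obtain ⟨k, -, hk⟩ := (isIrreducible_iff_exists_pow_pos hirr.nonneg).1 hirr i j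
  rw [← vecMul_pow_of_vecMul_eq hw k]
  exact Finset.sum_pos' (fun l _ => mul_nonneg (hw0 l) (pow_apply_nonneg hirr.nonneg k l j))
    ⟨i, Finset.mem_univ i, mul_pos ((hw0 i).lt_of_ne' hi) hk⟩

variable [DecidableEq ι]

lemma one_sub_mulVec_one (hP : P ∈ rowStochastic R ι) : (1 - P) *ᵥ 1 = 0 := by
  rw [sub_mulVec, one_mulVec, one_vecMul_of_mem_rowStochastic hP, sub_self]

lemma le_pow_mulVec_of_le_mulVec (hP : P ∈ rowStochastic R ι) {x : ι → R} (hx : x ≤ P *ᵥ x)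
    (k : ℕ) : x ≤ (P ^ k) *ᵥ x := by
  induction k with
  | zero => simp
  | succ k ih =>
    rw [pow_succ, ← mulVec_mulVec]
    exact ih.trans fun i => dotProduct_le_dotProduct_of_nonneg_left hx
      fun j => nonneg_of_mem_rowStochastic (pow_mem hP k)

lemma eq_of_le_mulVec (hP : P ∈ rowStochastic R ι) (hirr : P.IsIrreducible) {x : ι → R}
    (hx : x ≤ P *ᵥ x) (i j : ι) : x i = x j := by
  have : Nonempty ι := ⟨i⟩
  obtain ⟨a, ha⟩ := Finite.exists_max x
  suffices h : ∀ l, x l = x a by rw [h i, h j]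
  intro l
  obtain ⟨k, -, hk⟩ := (isIrreducible_iff_exists_pow_pos hirr.nonneg).1 hirr a l
  have hPk : P ^ k ∈ rowStochastic R ι := pow_mem hP k
  by_contra hne
  have hlt : ∑ b, (P ^ k) a b * x b < ∑ b, (P ^ k) a b * x a :=
    Finset.sum_lt_sum
      (fun b _ => mul_le_mul_of_nonneg_left (ha b) (nonneg_of_mem_rowStochastic hPk))
      ⟨l, Finset.mem_univ l, mul_lt_mul_of_pos_left ((ha l).lt_of_ne hne) hk⟩
  rw [← Finset.sum_mul, sum_row_of_mem_rowStochastic hPk, one_mul] at hlt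
  exact (le_pow_mulVec_of_le_mulVec hP hx k a).not_gt hlt

lemma abs_vecMul_eq_of_vecMul_eq (hP : P ∈ rowStochastic R ι) {w : ι → R} (hw : w ᵥ* P = w) :
    |w| ᵥ* P = |w| := by
  have hle : |w| ≤ |w| ᵥ* P := by
    have h := abs_mulVec_le_s13 (A := Pᵀ) (fun i j => nonneg_of_mem_rowStochastic hP) w
    rwa [mulVec_transpose, mulVec_transpose, hw] at h
  have hsum : ∑ j, |w| j = ∑ j, (|w| ᵥ* P) j := by
    rw [← dotProduct_one, ← dotProduct_one, ← dotProduct_mulVec,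
      one_vecMul_of_mem_rowStochastic hP]
  funext j
  exact ((Finset.sum_eq_sum_iff_of_le fun j _ => hle j).1 hsum j (Finset.mem_univ j)).symm

lemma exists_pos_vecMul_one_sub_eq_zero [Nonempty ι] (hP : P ∈ rowStochastic R ι)
    (hirr : P.IsIrreducible) : ∃ μ : ι → R, (∀ i, 0 < μ i) ∧ μ ᵥ* (1 - P) = 0 := by
  have hdet : (1 - P).det = 0 :=
    exists_mulVec_eq_zero_iff.1 ⟨1, one_ne_zero, one_sub_mulVec_one hP⟩
  obtain ⟨w, hne, hw⟩ := exists_vecMul_eq_zero_iff.2 hdet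
  rw [vecMul_sub, vecMul_one, sub_eq_zero, eq_comm] at hw
  have habs := abs_vecMul_eq_of_vecMul_eq hP hw
  have habs_ne : |w| ≠ 0 := fun h => hne (funext fun i => abs_eq_zero.1 (congrFun h i))
  refine ⟨|w|, pos_of_vecMul_eq hirr (abs_nonneg w) habs_ne habs, ?_⟩
  rw [vecMul_sub, vecMul_one, habs, sub_self]

end IrreducibleStochastic

lemma ne_one_of_isIrreducible {R ι : Type*} [CommRing R] [LinearOrder R] [IsStrictOrderedRing R]
    [Finite ι] [Nontrivial ι] [DecidableEq ι] {P : Matrix ι ι R} (hirr : P.IsIrreducible) :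
    P ≠ 1 := by
  rintro rfl
  cases nonempty_fintype ι
  obtain ⟨i, j, hij⟩ := exists_pair_ne ι
  have := eq_of_le_mulVec (one_mem _) hirr (x := Pi.single i 1) (one_mulVec _).ge i j
  simp [hij.symm] at this

section PrincipalMinor

variable {R ι m : Type*} [Fintype ι] [Fintype m] {e : m → ι}

lemma mulVec_comp_of_eq_zero_off_range [NonUnitalNonAssocSemiring R] (he : Function.Injective e)
    (A : Matrix ι ι R) {x : ι → R} (hx : ∀ i ∉ Set.range e, x i = 0) :
    (A *ᵥ x) ∘ e = A.submatrix e e *ᵥ (x ∘ e) :=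
  funext fun l => (Fintype.sum_of_injective e he (fun j => A (e l) (e j) * x (e j)) _
    (fun i hi => by rw [hx i hi, mul_zero]) fun _ => rfl).symm

variable [DecidableEq m]

lemma mulVec_comp_of_comp_eq_inv_mulVec [CommRing R] (he : Function.Injective e)
    {A : Matrix ι ι R} (hA : IsUnit (A.submatrix e e).det) {x c : ι → R}
    (hx : ∀ i ∉ Set.range e, x i = 0) (hxe : x ∘ e = (A.submatrix e e)⁻¹ *ᵥ (c ∘ e)) :
    (A *ᵥ x) ∘ e = c ∘ e := by
  rw [mulVec_comp_of_eq_zero_off_range he A hx, hxe, mulVec_mulVec, mul_nonsing_inv _ hA,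
    one_mulVec]

lemma det_submatrix_one_sub_ne_zero [CommRing R] [LinearOrder R] [IsStrictOrderedRing R]
    [DecidableEq ι] {P : Matrix ι ι R} (hP : P ∈ rowStochastic R ι) (hirr : P.IsIrreducible)
    (he : Function.Injective e) (hsurj : ¬ Function.Surjective e) :
    ((1 - P).submatrix e e).det ≠ 0 := by
  intro hdet
  obtain ⟨w, hne, hw⟩ := exists_mulVec_eq_zero_iff.2 hdet
  set x : ι → R := Function.extend e w 0
  have hxe : x ∘ e = w := funext fun l => he.extend_apply w (0 : ι → R) l
  have hx : ∀ i ∉ Set.range e, x i = 0 := fun i hi =>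
    Function.extend_apply' w (0 : ι → R) i hi
  have hharm : ∀ l, x (e l) = (P *ᵥ x) (e l) := fun l => by
    have h := congrFun (mulVec_comp_of_eq_zero_off_range he (1 - P) hx) l
    rw [hxe, hw] at h
    simpa [sub_mulVec, sub_eq_zero] using h
  -- Extending by zero makes `|x|` subharmonic, hence constant, and it vanishes off the range.
  have hsub : |x| ≤ P *ᵥ |x| := fun i => by
    by_cases hi : i ∈ Set.range e
    · obtain ⟨l, rfl⟩ := hi
      rw [Pi.abs_apply, hharm l]
      exact abs_mulVec_le_s13 hirr.nonneg x (e l)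
    · rw [Pi.abs_apply, hx i hi, abs_zero]
      exact nonneg_mulVec_of_mem_rowStochastic hP (fun j => abs_nonneg (x j)) i
  obtain ⟨i, hi⟩ := not_forall.1 hsurj
  refine hne (funext fun l => abs_eq_zero.1 ?_)
  rw [← hxe, Function.comp_apply, ← Pi.abs_apply, eq_of_le_mulVec hP hirr hsub (e l) i,
    Pi.abs_apply, hx i hi, abs_zero]

end PrincipalMinor

lemma dotProduct_eq_zero_iff_of_nonneg {R m : Type*} [Fintype m] [Ring R] [LinearOrder R]
    [IsStrictOrderedRing R] {α s : m → R} (hα : 0 ≤ α) (hs : 0 ≤ s) :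
    α ⬝ᵥ s = 0 ↔ ∀ i, 0 < s i → α i = 0 := by
  rw [dotProduct, Finset.sum_eq_zero_iff_of_nonneg fun i _ => mul_nonneg (hα i) (hs i)]
  refine ⟨fun h i hi => (mul_eq_zero.1 (h i (Finset.mem_univ i))).resolve_right hi.ne',
    fun h i _ => ?_⟩
  rcases (hs i).eq_or_lt with hi | hi
  · rw [← hi, Pi.zero_apply, mul_zero]
  · rw [h i hi, zero_mul]

lemma exists_vecMul_eq_of_dotProduct_eq_zero {K m ι : Type*} [Field K] [Fintype m] [Fintype ι]
    {A : Matrix m ι K} {v : ι → K} (hv : ∀ w, A *ᵥ w = 0 → v ⬝ᵥ w = 0) :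
    ∃ β : m → K, β ᵥ* A = v := by
  classical
  have hspan : dotProductBilin K K v ∈
      Submodule.span K (Set.range fun i => dotProductBilin K K (A i)) :=
    mem_span_of_iInf_ker_le_ker fun w hw =>
      hv w (funext fun i => (Submodule.mem_iInf _).1 hw i)
  obtain ⟨β, hβ⟩ := (Submodule.mem_span_range_iff_exists_fun K).1 hspan
  refine ⟨β, funext fun j => ?_⟩
  simpa [vecMul, dotProduct, Pi.single_apply] using LinearMap.congr_fun hβ (Pi.single j 1)

section Polyhedron

variable {R m ι : Type*} [Fintype ι]

/-- The slack of the affine constraints `0 ≤ A x + b` at the point `x`. -/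
def slack [NonUnitalNonAssocSemiring R] (A : Matrix m ι R) (b : m → R) (x : ι → R) : m → R :=
  A *ᵥ x + b

/-- The polyhedron `{x | 0 ≤ A x + b}`; the domain `D` is the case `A = 1 - P`, `b = c`. -/
def polyhedron [NonUnitalNonAssocSemiring R] [LE R] (A : Matrix m ι R) (b : m → R) :
    Set (ι → R) :=
  {x | 0 ≤ slack A b x}

lemma mem_polyhedron [NonUnitalNonAssocSemiring R] [LE R] {A : Matrix m ι R} {b : m → R}
    {x : ι → R} : x ∈ polyhedron A b ↔ 0 ≤ slack A b x :=
  Iff.rfl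

/-- The outward normal cone of the set `D` at the point `y`, with vectors identified with linear
functionals through the dot product. -/
def normalCone [NonUnitalNonAssocRing R] [LE R] (D : Set (ι → R)) (y : ι → R) : Set (ι → R) :=
  {v | ∀ z ∈ D, v ⬝ᵥ (z - y) ≤ 0}

section CommRing

variable [CommRing R] {A : Matrix m ι R} {b : m → R}

lemma slack_add_of_mulVec_eq_zero {w : ι → R} (hw : A *ᵥ w = 0) (x : ι → R) :
    slack A b (x + w) = slack A b x := by
  rw [slack, mulVec_add, hw, add_zero, slack]

lemma slack_sum_smul {κ : Type*} [Fintype κ] {a : κ → R} (ha : ∑ k, a k = 1) (x : κ → ι → R) :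
    slack A b (∑ k, a k • x k) = ∑ k, a k • slack A b (x k) := by
  simp only [slack, smul_add, Finset.sum_add_distrib, ← Finset.sum_smul, ha, one_smul,
    mulVec_sum, mulVec_smul]

lemma dotProduct_eq_zero_of_mem_normalCone [PartialOrder R] [IsOrderedRing R]
    {y v w : ι → R} (hy : y ∈ polyhedron A b) (hv : v ∈ normalCone (polyhedron A b) y)
    (hw : A *ᵥ w = 0) : v ⬝ᵥ w = 0 := by
  have hle : ∀ u, A *ᵥ u = 0 → v ⬝ᵥ u ≤ 0 := fun u hu => by
    have hyu : y + u ∈ polyhedron A b := by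
      rwa [mem_polyhedron, slack_add_of_mulVec_eq_zero hu]
    simpa using hv _ hyu
  refine (hle w hw).antisymm ?_
  simpa using hle (-w) (by rw [mulVec_neg, hw, neg_zero])

variable [Fintype m]

lemma vecMul_dotProduct_sub (α : m → R) (z y : ι → R) :
    (α ᵥ* A) ⬝ᵥ (z - y) = α ⬝ᵥ slack A b z - α ⬝ᵥ slack A b y := by
  rw [← dotProduct_mulVec, ← dotProduct_sub, slack, slack, add_sub_add_right_eq_sub, mulVec_sub]

lemma dotProduct_slack_of_vecMul_eq_zero {μ : m → R} (hμA : μ ᵥ* A = 0) (x : ι → R) :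
    μ ⬝ᵥ slack A b x = μ ⬝ᵥ b := by
  rw [slack, dotProduct_add, dotProduct_mulVec, hμA, zero_dotProduct, zero_add]

lemma neg_vecMul_mem_normalCone [PartialOrder R] [IsOrderedRing R] {y : ι → R} {α : m → R}
    (hα : 0 ≤ α) (hαy : α ⬝ᵥ slack A b y = 0) : -(α ᵥ* A) ∈ normalCone (polyhedron A b) y := by
  intro z hz
  rw [neg_dotProduct, vecMul_dotProduct_sub (b := b), hαy, sub_zero, neg_nonpos]
  exact dotProduct_nonneg_of_nonneg hα hz

end CommRing

section Field

variable [Field R] [Fintype m] [DecidableEq m] {A : Matrix m ι R} {b μ : m → R}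

lemma slack_eq_single (hμA : μ ᵥ* A = 0) {k : m} (hμk : μ k ≠ 0) {x : ι → R}
    (hx : ∀ i ≠ k, slack A b x i = 0) : slack A b x = Pi.single k (μ ⬝ᵥ b / μ k) := by
  have hsingle : slack A b x = Pi.single k (slack A b x k) := by
    ext i
    rcases eq_or_ne i k with rfl | hi
    · rw [Pi.single_eq_same]
    · rw [hx i hi, Pi.single_eq_of_ne hi]
  have hk := dotProduct_slack_of_vecMul_eq_zero (b := b) hμA x
  rw [hsingle, dotProduct_single] at hk
  rw [hsingle, ← hk, mul_div_cancel_left₀ _ hμk]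

lemma slack_sum_smul_vertices {d : m → R} {Y : m → ι → R}
    (hY : ∀ k, slack A b (Y k) = Pi.single k (d k)) {a : m → R} (ha : ∑ k, a k = 1) (j : m) :
    slack A b (∑ k, a k • Y k) j = a j * d j := by
  simp [slack_sum_smul ha, hY, Finset.sum_apply, Pi.single_apply]

variable [LinearOrder R] [IsStrictOrderedRing R]

lemma exists_nonneg_of_mem_normalCone (hμA : μ ᵥ* A = 0) (hμb : μ ⬝ᵥ b ≠ 0) {d : m → R}
    (hd : ∀ k, 0 < d k) {Y : m → ι → R} (hY : ∀ k, slack A b (Y k) = Pi.single k (d k))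
    {y v : ι → R} (hy : y ∈ polyhedron A b) (hv : v ∈ normalCone (polyhedron A b) y) :
    ∃ α : m → R, 0 ≤ α ∧ α ⬝ᵥ slack A b y = 0 ∧ v = -(α ᵥ* A) := by
  obtain ⟨β, hβ⟩ := exists_vecMul_eq_of_dotProduct_eq_zero fun w hw =>
    show -v ⬝ᵥ w = 0 by rw [neg_dotProduct, dotProduct_eq_zero_of_mem_normalCone hy hv hw, neg_zero]
  set α := β - (β ⬝ᵥ slack A b y / μ ⬝ᵥ b) • μ with hα
  have hαA : α ᵥ* A = -v := by rw [hα, sub_vecMul, smul_vecMul, hμA, smul_zero, sub_zero, hβ]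
  have hαy : α ⬝ᵥ slack A b y = 0 := by
    rw [hα, sub_dotProduct, smul_dotProduct, dotProduct_slack_of_vecMul_eq_zero hμA, smul_eq_mul,
      div_mul_cancel₀ _ hμb, sub_self]
  refine ⟨α, fun k => ?_, hαy, by rw [hαA, neg_neg]⟩
  have hYk : Y k ∈ polyhedron A b := by
    rw [mem_polyhedron, hY]
    exact Pi.single_nonneg.2 (hd k).le
  have hαk : 0 ≤ α k * d k := calc
    0 ≤ -v ⬝ᵥ (Y k - y) := by rw [neg_dotProduct]; exact neg_nonneg.2 (hv _ hYk)
    _ = α ⬝ᵥ slack A b (Y k) := by rw [← hαA, vecMul_dotProduct_sub (b := b), hαy, sub_zero]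
    _ = α k * d k := by rw [hY, dotProduct_single]
  exact nonneg_of_mul_nonneg_left hαk (hd k)

theorem mem_normalCone_polyhedron_iff (hμA : μ ᵥ* A = 0) (hμb : μ ⬝ᵥ b ≠ 0) {d : m → R}
    (hd : ∀ k, 0 < d k) {Y : m → ι → R} (hY : ∀ k, slack A b (Y k) = Pi.single k (d k))
    {y : ι → R} (hy : y ∈ polyhedron A b) {v : ι → R} :
    v ∈ normalCone (polyhedron A b) y ↔
      ∃ α : m → R, 0 ≤ α ∧ (∀ j, 0 < slack A b y j → α j = 0) ∧ v = -(α ᵥ* A) := by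
  constructor
  · intro hv
    obtain ⟨α, hα, hαy, hvα⟩ := exists_nonneg_of_mem_normalCone hμA hμb hd hY hy hv
    exact ⟨α, hα, (dotProduct_eq_zero_iff_of_nonneg hα hy).1 hαy, hvα⟩
  · rintro ⟨α, hα, hαy, rfl⟩
    exact neg_vecMul_mem_normalCone hα ((dotProduct_eq_zero_iff_of_nonneg hα hy).2 hαy)

end Field

lemma slack_pos_of_mem_interior {A : Matrix m ι ℝ} {b : m → ℝ} {x : ι → ℝ}
    (hx : x ∈ interior (polyhedron A b)) {i : m} (hi : A i ≠ 0) : 0 < slack A b x i := by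
  have hopen : IsOpenMap fun z => slack A b z i := by
    set f : (ι → ℝ) →L[ℝ] ℝ := (dotProductBilin ℝ ℝ (A i)).toContinuousLinearMap
    have hf : f ≠ 0 := fun h => hi (dotProduct_eq_zero _ fun w => DFunLike.congr_fun h w)
    exact (isOpenMap_add_right (b i)).comp (f.isOpenMap_of_ne_zero hf)
  have hmem := hopen.mapsTo_interior (t := Set.Ici 0) (fun z hz => mem_polyhedron.1 hz i) hx
  rwa [interior_Ici] at hmem

lemma dotProduct_pos_of_nonempty_interior [Fintype m] {A : Matrix m ι ℝ} (hA : A ≠ 0)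
    {b μ : m → ℝ} (hμ : ∀ i, 0 < μ i) (hμA : μ ᵥ* A = 0)
    (hint : (interior (polyhedron A b)).Nonempty) : 0 < μ ⬝ᵥ b := by
  obtain ⟨x, hx⟩ := hint
  obtain ⟨i, hi⟩ := Function.ne_iff.1 hA
  rw [← dotProduct_slack_of_vecMul_eq_zero hμA x]
  exact Finset.sum_pos' (fun j _ => mul_nonneg (hμ j).le (interior_subset hx j))
    ⟨i, Finset.mem_univ i, mul_pos (hμ i) (slack_pos_of_mem_interior hx hi)⟩

end Polyhedron

/-- The point `y^k = (C r k - C ℓ k)_ℓ` attached to the column `k` of the cost matrix `C` and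
normalized to vanish at the reference state `r`; the extreme points of `D_∘` are those with
`r = d`. -/
def costVertex {R ι : Type*} [Sub R] (C : ι → ι → R) (r k : ι) : ι → R :=
  fun ℓ => C r k - C ℓ k

lemma slack_costVertex_apply_of_ne {K : Type*} [Field K] [LinearOrder K] [IsStrictOrderedRing K]
    {n : ℕ} {P : Matrix (Fin (n + 1)) (Fin (n + 1)) K} (hP : P ∈ rowStochastic K (Fin (n + 1)))
    (hirr : P.IsIrreducible) {c : Fin (n + 1) → K} {C : Fin (n + 1) → Fin (n + 1) → K}
    {k : Fin (n + 1)} (hCdiag : C k k = 0)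
    (hCoff : ∀ l, C (k.succAbove l) k =
      (((1 - P).submatrix k.succAbove k.succAbove)⁻¹ *ᵥ fun l => c (k.succAbove l)) l)
    (r : Fin (n + 1)) {i : Fin (n + 1)} (hik : i ≠ k) :
    slack (1 - P) c (costVertex C r k) i = 0 := by
  have hnot : ¬ Function.Surjective k.succAbove := fun h => (h k).elim fun l => k.succAbove_ne l
  have hdet := det_submatrix_one_sub_ne_zero hP hirr k.succAbove_right_injective hnot
  have hcol := mulVec_comp_of_comp_eq_inv_mulVec (x := fun ℓ => C ℓ k) (c := c)
    k.succAbove_right_injective hdet.isUnit (by simp [hCdiag]) (funext hCoff)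
  obtain ⟨l, rfl⟩ := Fin.exists_succAbove_eq hik
  have hvertex : costVertex C r k = C r k • 1 - fun ℓ => C ℓ k := by ext; simp [costVertex]
  rw [slack, hvertex, mulVec_sub, mulVec_smul, one_sub_mulVec_one hP, smul_zero, zero_sub]
  exact neg_add_eq_zero.2 (congrFun hcol l)

lemma mem_polyhedron_one_sub_iff {R ι : Type*} [Fintype ι] [DecidableEq ι] [CommRing R]
    [PartialOrder R] [IsOrderedRing R] {P : Matrix ι ι R} {c x : ι → R} :
    x ∈ polyhedron (1 - P) c ↔ ∀ i, ∑ j, P i j * x j - c i ≤ x i := by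
  refine forall_congr' fun i => ?_
  rw [slack, sub_mulVec, one_mulVec, ← sub_nonneg (b := _ - c i), sub_sub_eq_add_sub,
    add_sub_right_comm]
  rfl

/-- Uncontrolled setting with an irreducible stochastic matrix `P`
(`d = n + 2`), cost vector `c̄`, cost matrix `C` and domain `D` with nonempty interior.
Let `y ∈ D_∘`, with (unique) barycentric representation `y = ∑ i, lam i • y^i` in the
extreme points `y^i = (C_{d,i} − C_{ℓ,i})_ℓ` of `D_∘`, where `lam i ≥ 0` and
`∑ lam = 1`; set `E_y = {i : lam i > 0}` and let `n_j = (−Q_{j,k})_k` be the negative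
of the `j`-th row of `Q`.  Then the outward normal cone of `D` at `y` is
`C(y) = { ∑_{j ∉ E_y} α_j n_j : α_j ≥ 0 }`. -/
theorem normal_cone_generated_by_inactive_rows
    (n : ℕ)
    (P : Matrix (Fin (n + 2)) (Fin (n + 2)) ℝ)
    (c : Fin (n + 2) → ℝ)
    (hP0 : ∀ i j, 0 ≤ P i j)
    (hP1 : ∀ i, ∑ j, P i j = 1)
    (hirr : ∀ i j, ∃ k : ℕ, 1 ≤ k ∧ 0 < (P ^ k) i j)
    (C : Fin (n + 2) → Fin (n + 2) → ℝ)
    (hCdiag : ∀ j, C j j = 0)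
    (hCoff : ∀ (j : Fin (n + 2)) (k : Fin (n + 1)),
      C (j.succAbove k) j =
        (((1 - P).submatrix j.succAbove j.succAbove)⁻¹ *ᵥ fun l => c (j.succAbove l)) k)
    (D : Set (Fin (n + 2) → ℝ))
    (hD : D = {x | ∀ i, (∑ j, P i j * x j) - c i ≤ x i})
    (hint : (interior D).Nonempty)
    (y : Fin (n + 2) → ℝ) (hyD : y ∈ D) (hyd : y (Fin.last (n + 1)) = 0)
    (lam : Fin (n + 2) → ℝ)
    (hlam0 : ∀ i, 0 ≤ lam i) (hlam1 : ∑ i, lam i = 1)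
    (hrep : ∀ ℓ, y ℓ = ∑ i, lam i * (C (Fin.last (n + 1)) i - C ℓ i)) :
    {v : Fin (n + 2) → ℝ | ∀ z ∈ D, (∑ i, v i * (z i - y i)) ≤ 0} =
      {v : Fin (n + 2) → ℝ | ∃ α : Fin (n + 2) → ℝ,
        (∀ j, 0 ≤ α j) ∧ (∀ j, 0 < lam j → α j = 0) ∧
        ∀ k, v k = ∑ j, α j * (-(1 - P) j k)} := by
  have hP : P ∈ rowStochastic ℝ _ := mem_rowStochastic_iff_sum.2 ⟨hP0, hP1⟩
  have hirrP : P.IsIrreducible := (isIrreducible_iff_exists_pow_pos hP0).2 hirr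
  obtain ⟨μ, hμ, hμQ⟩ := exists_pos_vecMul_one_sub_eq_zero hP hirrP
  obtain rfl : D = polyhedron (1 - P) c :=
    hD.trans (Set.ext fun x => mem_polyhedron_one_sub_iff.symm)
  have hμc : 0 < μ ⬝ᵥ c := dotProduct_pos_of_nonempty_interior
    (sub_ne_zero.2 (ne_one_of_isIrreducible hirrP).symm) hμ hμQ hint
  have hd : ∀ k, 0 < μ ⬝ᵥ c / μ k := fun k => div_pos hμc (hμ k)
  have hvertex : ∀ k, slack (1 - P) c (costVertex C (Fin.last _) k) =
      Pi.single k (μ ⬝ᵥ c / μ k) := fun k =>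
    slack_eq_single hμQ (hμ k).ne' fun _ hik =>
      slack_costVertex_apply_of_ne hP hirrP (hCdiag k) (hCoff k) _ hik
  have hy : y = ∑ k, lam k • costVertex C (Fin.last _) k := by
    ext ℓ
    simp [hrep, costVertex]
  have hactive : ∀ j, 0 < slack (1 - P) c y j ↔ 0 < lam j := fun j => by
    rw [hy, slack_sum_smul_vertices hvertex hlam1, mul_pos_iff_of_pos_right (hd j)]
  ext v
  refine (mem_normalCone_polyhedron_iff hμQ hμc.ne' hd hvertex hyD).trans ?_
  simp only [hactive, funext_iff, Pi.le_def, Pi.zero_apply, Pi.neg_apply, vecMul, dotProduct,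
    mul_neg, Finset.sum_neg_distrib, Set.mem_ofPred_eq]
end
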